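/- arXiv:2106.03005 — 2 statements merged into one kernel-verified Lean document; each statement's English description precedes it below -/
import Mathlib

section
/- Fix an integer n ≥ 0. If T is admissible (i.e. |T − γ| ≥ δ/log T for every ordinate γ of a non-trivial zero of ζ, for some fixed δ > 0), then uniformly for −1 ≤ σ ≤ 2, the n-th derivative of ζ'/ζ satisfies (ζ'/ζ)^{(n)}(σ + iT) ≪ log^{n+2} T, with implied constant depending only on n and δ. -/
open Complex Filter

/-- A non-trivial zero of the Riemann zeta function. -/
def IsNontrivialZero (ρ : ℂ) : Prop :=
  riemannZeta ρ = 0 ∧ 0 < ρ.re ∧ ρ.re < 1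

/-- `T` is admissible: `|T - γ| ≥ δ / log T` for every ordinate `γ` of a
non-trivial zero of `ζ`. -/
def AdmissibleHeight (δ T : ℝ) : Prop :=
  ∀ ρ : ℂ, IsNontrivialZero ρ → δ / Real.log T ≤ |T - ρ.im|

/-!
By Landau's lemma, if `‖f‖ ≤ A ‖f c‖` on a disc about `c` and `w` lies well inside that disc, at
distance at least `d ≤ 1` from the zeros of `f`, then `f'/f` is `O(log A / d)` at `w`: dividing out
a zero with a Blaschke factor changes `f'/f (w)` by `O(1/d)` and decreases `log A` by a fixed
amount, so that `O(log A)` such steps leave a zero-free function, to which the Borel–Carathéodory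
inequality applies. For `f = ζ` and `c = 2 + iT` one may take `A` to be a power of `T`, because the
functional equation and the Phragmén–Lindelöf principle bound `ζ` polynomially in vertical strips.
Admissibility allows `d = δ / log T`, whence `ζ'/ζ = O(log² T)` on the disc of radius `d / 2` about
`σ + iT`, and Cauchy's inequality costs one factor `1 / d` per derivative.
-/

section LogarithmicDerivative

open Metric ComplexConjugate

variable {f : ℂ → ℂ} {r s R A d M : ℝ} {w ρ : ℂ}

lemma exists_eqOn_mul_exp (hf : DifferentiableOn ℂ f (ball 0 R))
    (hf0 : ∀ z ∈ ball (0 : ℂ) R, f z ≠ 0) :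
    ∃ g : ℂ → ℂ, g 0 = 0 ∧ (∀ z ∈ ball (0 : ℂ) R, HasDerivAt g (logDeriv f z) z) ∧
      Set.EqOn f (fun z => f 0 * exp (g z)) (ball 0 R) := by
  have hlog : DifferentiableOn ℂ (logDeriv f) (ball 0 R) := (hf.deriv isOpen_ball).div hf hf0
  obtain ⟨g, hg0, hg⟩ := hlog.isExactOn_ball.with_val_at 0 0
  refine ⟨g, hg0, hg, fun z hz => ?_⟩
  have hexp : DifferentiableOn ℂ (fun z => exp (g z)) (ball 0 R) :=
    fun x hx => (hg x hx).cexp.differentiableAt.differentiableWithinAt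
  have hlogDeriv : Set.EqOn (logDeriv f) (logDeriv fun z => exp (g z)) (ball 0 R) := fun x hx => by
    rw [logDeriv_apply (fun z => exp (g z)), (hg x hx).cexp.deriv,
      mul_div_cancel_left₀ _ (exp_ne_zero _)]
  obtain ⟨a, -, hfa⟩ := (logDeriv_eqOn_iff hf hexp isOpen_ball
    (convex_ball (0 : ℂ) R).isPreconnected (fun _ _ => exp_ne_zero _) hf0).1 hlogDeriv
  have ha : f 0 = a := by
    simpa [hg0] using hfa (mem_ball_self (pos_of_mem_ball hz))
  simpa [ha] using hfa hz

lemma norm_deriv_le_of_re_le (hrR : r < R) (hM : 0 < M) (hf : DifferentiableOn ℂ f (ball 0 R))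
    (hre : Set.MapsTo f (ball 0 R) {z | z.re ≤ M}) (hf0 : f 0 = 0) (hw : ‖w‖ ≤ r) :
    ‖deriv f w‖ ≤ 4 * (R + r) / (R - r) ^ 2 * M := by
  have hr : 0 ≤ r := (norm_nonneg w).trans hw
  have hnorm : ∀ z ∈ closedBall w ((R - r) / 2), ‖z‖ ≤ (R + r) / 2 := fun z hz => by
    have := norm_le_norm_add_norm_sub' z w
    rw [mem_closedBall_iff_norm] at hz
    linarith
  have hsub : closedBall w ((R - r) / 2) ⊆ ball 0 R := fun z hz => by
    rw [mem_ball_zero_iff]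
    linarith [hnorm z hz]
  have hsphere : ∀ z ∈ sphere w ((R - r) / 2), ‖f z‖ ≤ 2 * M * (R + r) / (R - r) := fun z hz => by
    have hz' := sphere_subset_closedBall hz
    calc ‖f z‖ ≤ 2 * M * ‖z‖ / (R - ‖z‖) :=
          borelCaratheodory_zero hM hf hre (by linarith) (hsub hz') hf0
      _ ≤ 2 * M * ((R + r) / 2) / (R - (R + r) / 2) := by
          have := hnorm z hz'
          gcongr
          · exact mul_nonneg (by positivity) (by linarith)
          · linarith
      _ = 2 * M * (R + r) / (R - r) := by
          rw [show R - (R + r) / 2 = (R - r) / 2 by ring]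
          field_simp
  calc ‖deriv f w‖ ≤ 2 * M * (R + r) / (R - r) / ((R - r) / 2) :=
        norm_deriv_le_of_forall_mem_sphere_norm_le (by linarith) (hf.diffContOnCl_ball hsub) hsphere
    _ = 4 * (R + r) / (R - r) ^ 2 * M := by
        have : R - r ≠ 0 := by linarith
        field_simp
        ring

lemma norm_logDeriv_le_of_ne_zero (hrR : r < R) (hf : DifferentiableOn ℂ f (ball 0 R))
    (hf0 : ∀ z ∈ ball (0 : ℂ) R, f z ≠ 0) (hA : ∀ z ∈ ball (0 : ℂ) R, ‖f z‖ ≤ A * ‖f 0‖)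
    (hw : ‖w‖ ≤ r) : ‖logDeriv f w‖ ≤ 4 * (R + r) / (R - r) ^ 2 * Real.log A := by
  have hr : 0 ≤ r := (norm_nonneg w).trans hw
  have hR : 0 < R := by linarith
  obtain ⟨g, hg0, hg, hfg⟩ := exists_eqOn_mul_exp hf hf0
  have hnorm0 : 0 < ‖f 0‖ := norm_pos_iff.2 (hf0 0 (mem_ball_self hR))
  have hA1 : 1 ≤ A := (le_mul_iff_one_le_left hnorm0).1 (hA 0 (mem_ball_self hR))
  have hre : ∀ z ∈ ball (0 : ℂ) R, (g z).re ≤ Real.log A := fun z hz => by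
    have := hA z hz
    rw [hfg hz, norm_mul, norm_exp, mul_comm] at this
    exact (Real.le_log_iff_exp_le (by linarith)).2 (le_of_mul_le_mul_right this hnorm0)
  have hcoef : 0 < 4 * (R + r) / (R - r) ^ 2 :=
    div_pos (by positivity) (pow_pos (sub_pos.2 hrR) 2)
  have hwR : w ∈ ball (0 : ℂ) R := mem_ball_zero_iff.2 (hw.trans_lt hrR)
  -- Borel–Carathéodory needs a positive bound, whereas `log A` may vanish.
  rw [← div_le_iff₀' hcoef, ← (hg w hwR).deriv]
  refine le_of_forall_gt_imp_ge_of_dense fun M hM => (div_le_iff₀' hcoef).2 ?_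
  exact norm_deriv_le_of_re_le hrR ((Real.log_nonneg hA1).trans_lt hM)
    (fun z hz => (hg z hz).differentiableAt.differentiableWithinAt)
    (fun z hz => (hre z hz).trans hM.le) hg0 hw

lemma mul_sub_norm_le_norm_sq_sub_conj_mul (hw : ‖w‖ ≤ R) :
    R * (R - ‖ρ‖) ≤ ‖(R : ℂ) ^ 2 - conj ρ * w‖ := by
  have hR : 0 ≤ R := (norm_nonneg w).trans hw
  calc R * (R - ‖ρ‖) = R ^ 2 - ‖ρ‖ * R := by ring
    _ ≤ R ^ 2 - ‖ρ‖ * ‖w‖ := by gcongr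
    _ = ‖(R : ℂ) ^ 2‖ - ‖conj ρ * w‖ := by simp [abs_of_nonneg hR]
    _ ≤ ‖(R : ℂ) ^ 2 - conj ρ * w‖ := norm_sub_norm_le _ _

lemma sq_sub_conj_mul_ne_zero (hρ : ρ ∈ ball (0 : ℂ) R) (hw : w ∈ ball (0 : ℂ) R) :
    (R : ℂ) ^ 2 - conj ρ * w ≠ 0 :=
  norm_pos_iff.1 ((mul_pos (pos_of_mem_ball hρ) (sub_pos.2 (mem_ball_zero_iff.1 hρ))).trans_le
    (mul_sub_norm_le_norm_sq_sub_conj_mul (mem_ball_zero_iff.1 hw).le))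

lemma exists_diffContOnCl_eq_blaschke_mul (hρ : ρ ∈ ball (0 : ℂ) R)
    (hf : DiffContOnCl ℂ f (ball 0 R)) (hfρ : f ρ = 0) :
    ∃ g : ℂ → ℂ, DiffContOnCl ℂ g (ball 0 R) ∧
      (∀ z, R * (z - ρ) * g z = (R ^ 2 - conj ρ * z) * f z) ∧
      ∀ z ∈ sphere (0 : ℂ) R, ‖g z‖ = ‖f z‖ := by
  have hR : 0 < R := pos_of_mem_ball hρ
  have hR0 : (R : ℂ) ≠ 0 := ofReal_ne_zero.2 hR.ne'
  have hdslope : DiffContOnCl ℂ (dslope f ρ) (ball 0 R) :=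
    ⟨(differentiableOn_dslope (isOpen_ball.mem_nhds hρ)).2 hf.differentiableOn,
      (continuousOn_dslope (mem_of_superset (isOpen_ball.mem_nhds hρ) subset_closure)).2
        ⟨hf.continuousOn, hf.differentiableAt isOpen_ball hρ⟩⟩
  have hfactor : DiffContOnCl ℂ (fun z => (R ^ 2 - conj ρ * z) / R) (ball 0 R) :=
    Differentiable.diffContOnCl (by fun_prop)
  have hgf : ∀ z, R * (z - ρ) * ((R ^ 2 - conj ρ * z) / R * dslope f ρ z) =
      (R ^ 2 - conj ρ * z) * f z := fun z => by
    have := sub_smul_dslope_of_zero hfρ z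
    rw [smul_eq_mul] at this
    rw [← this]
    field_simp
  refine ⟨fun z => (R ^ 2 - conj ρ * z) / R * dslope f ρ z, hfactor.smul hdslope, hgf,
    fun z hz => ?_⟩
  have hzρ : z - ρ ≠ 0 := sub_ne_zero.2 (sphere_disjoint_ball.ne_of_mem hz hρ)
  have hcanonical : (R ^ 2 - conj ρ * z) / R * dslope f ρ z = canonicalFactor R ρ z * f z := by
    rw [canonicalFactor_apply, div_mul_eq_mul_div _ _ (f z), ← hgf z]
    field_simp
  calc ‖(R ^ 2 - conj ρ * z) / R * dslope f ρ z‖ = ‖canonicalFactor R ρ z * f z‖ := by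
        rw [hcanonical]
    _ = ‖f z‖ := by rw [norm_mul, norm_canonicalFactor_eval_circle_eq_one hρ hz, one_mul]

lemma norm_logDeriv_le_add_of_blaschke {g : ℂ → ℂ} (hρ : ‖ρ‖ ≤ s) (hsR : s < R) (hw : ‖w‖ < R)
    (hd : 0 < d) (hdist : d ≤ ‖w - ρ‖) (hf : DifferentiableAt ℂ f w)
    (hg : DifferentiableAt ℂ g w) (hfw : f w ≠ 0)
    (hgf : ∀ z, R * (z - ρ) * g z = (R ^ 2 - conj ρ * z) * f z) :
    ‖logDeriv f w‖ ≤ ‖logDeriv g w‖ + (1 / d + 1 / (R - s)) := by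
  have hR : 0 < R := (norm_nonneg w).trans_lt hw
  have hwρ : w - ρ ≠ 0 := norm_pos_iff.1 (hd.trans_le hdist)
  have hQnorm := mul_sub_norm_le_norm_sq_sub_conj_mul (ρ := ρ) hw.le
  have hQpos : 0 < R * (R - ‖ρ‖) := mul_pos hR (by linarith)
  have hQ : (R : ℂ) ^ 2 - conj ρ * w ≠ 0 := norm_pos_iff.1 (hQpos.trans_le hQnorm)
  have hgw : g w ≠ 0 := right_ne_zero_of_mul (hgf w ▸ mul_ne_zero hQ hfw)
  have hRw : (R : ℂ) * (w - ρ) ≠ 0 := mul_ne_zero (ofReal_ne_zero.2 hR.ne') hwρ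
  have hlog : logDeriv (fun z => (R : ℂ) * (z - ρ)) w + logDeriv g w =
      logDeriv (fun z => (R : ℂ) ^ 2 - conj ρ * z) w + logDeriv f w := by
    rw [← logDeriv_mul (f := fun z => (R : ℂ) * (z - ρ)) w hRw hgw (by fun_prop) hg,
      ← logDeriv_mul (f := fun z => (R : ℂ) ^ 2 - conj ρ * z) w hQ hfw (by fun_prop) hf]
    exact congrArg (logDeriv · w) (funext hgf)
  have hlin : logDeriv (fun z => (R : ℂ) * (z - ρ)) w = 1 / (w - ρ) := by
    rw [logDeriv_const_mul _ _ (ofReal_ne_zero.2 hR.ne')]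
    simp [logDeriv_apply]
  have hblaschke : logDeriv (fun z => (R : ℂ) ^ 2 - conj ρ * z) w =
      -(conj ρ / (R ^ 2 - conj ρ * w)) := by
    simp [logDeriv_apply, neg_div]
  have hsum : logDeriv f w = logDeriv g w + (1 / (w - ρ) + conj ρ / (R ^ 2 - conj ρ * w)) := by
    linear_combination -hlog + hlin - hblaschke
  have hpole : ‖1 / (w - ρ)‖ ≤ 1 / d := by
    rw [norm_div, norm_one]
    gcongr
  have hreflected : ‖conj ρ / (R ^ 2 - conj ρ * w)‖ ≤ 1 / (R - s) := by
    rw [norm_div, RCLike.norm_conj]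
    calc ‖ρ‖ / ‖(R : ℂ) ^ 2 - conj ρ * w‖ ≤ R / (R * (R - ‖ρ‖)) := by gcongr; linarith
      _ = 1 / (R - ‖ρ‖) := by field_simp
      _ ≤ 1 / (R - s) := by gcongr
  rw [hsum]
  exact (norm_add_le _ _).trans (by gcongr; exact (norm_add_le _ _).trans (by gcongr))

lemma exists_blaschke_factorization (hρ : ρ ∈ ball (0 : ℂ) s) (hsR : s < R)
    (hf : DiffContOnCl ℂ f (ball 0 R)) (hf0 : f 0 ≠ 0)
    (hA : ∀ z ∈ closedBall (0 : ℂ) R, ‖f z‖ ≤ A * ‖f 0‖) (hfρ : f ρ = 0) :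
    ∃ g : ℂ → ℂ, DiffContOnCl ℂ g (ball 0 R) ∧ g 0 ≠ 0 ∧
      (∀ z, R * (z - ρ) * g z = (R ^ 2 - conj ρ * z) * f z) ∧
      ∀ z ∈ closedBall (0 : ℂ) R, ‖g z‖ ≤ A / (R / s) * ‖g 0‖ := by
  have hs : 0 < s := pos_of_mem_ball hρ
  have hR : 0 < R := hs.trans hsR
  have hA0 : 0 ≤ A := nonneg_of_mul_nonneg_left
    ((norm_nonneg _).trans (hA 0 (mem_closedBall_self hR.le))) (norm_pos_iff.2 hf0)
  obtain ⟨g, hg, hgf, hgnorm⟩ :=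
    exists_diffContOnCl_eq_blaschke_mul (ball_subset_ball hsR.le hρ) hf hfρ
  have hg0 : R * ‖f 0‖ ≤ s * ‖g 0‖ := by
    have hnorm := congrArg norm (hgf 0)
    simp only [zero_sub, mul_zero, sub_zero, norm_mul, norm_neg, norm_pow, norm_real,
      Real.norm_of_nonneg hR.le] at hnorm
    have hρg : R * ‖f 0‖ = ‖ρ‖ * ‖g 0‖ := mul_left_cancel₀ hR.ne' (by linarith)
    rw [hρg]
    gcongr
    exact (mem_ball_zero_iff.1 hρ).le
  refine ⟨g, hg, norm_pos_iff.1 (pos_of_mul_pos_right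
    ((mul_pos hR (norm_pos_iff.2 hf0)).trans_le hg0) hs.le), hgf, fun z hz => ?_⟩
  have hfA : ‖g z‖ ≤ A * ‖f 0‖ := by
    refine norm_le_of_forall_mem_frontier_norm_le isBounded_ball hg (fun x hx => ?_)
      (by rwa [closure_ball _ hR.ne'])
    rw [frontier_ball _ hR.ne'] at hx
    exact (hgnorm x hx).trans_le (hA x (sphere_subset_closedBall hx))
  calc ‖g z‖ ≤ A * (s * ‖g 0‖ / R) := hfA.trans (by gcongr; rwa [le_div_iff₀' hR])
    _ = A / (R / s) * ‖g 0‖ := by field_simp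

lemma exists_norm_logDeriv_le_add_of_zero (hρ : ρ ∈ ball (0 : ℂ) s) (hsR : s < R)
    (hw : w ∈ ball (0 : ℂ) s) (hd : 0 < d) (hf : DiffContOnCl ℂ f (ball 0 R)) (hf0 : f 0 ≠ 0)
    (hA : ∀ z ∈ closedBall (0 : ℂ) R, ‖f z‖ ≤ A * ‖f 0‖) (hfρ : f ρ = 0)
    (hzeros : ∀ z ∈ ball (0 : ℂ) s, f z = 0 → d ≤ ‖w - z‖) :
    ∃ g : ℂ → ℂ, DiffContOnCl ℂ g (ball 0 R) ∧ g 0 ≠ 0 ∧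
      (∀ z ∈ closedBall (0 : ℂ) R, ‖g z‖ ≤ A / (R / s) * ‖g 0‖) ∧
      (∀ z ∈ ball (0 : ℂ) s, g z = 0 → d ≤ ‖w - z‖) ∧
      ‖logDeriv f w‖ ≤ ‖logDeriv g w‖ + (1 / d + 1 / (R - s)) := by
  have hball : ball (0 : ℂ) s ⊆ ball 0 R := ball_subset_ball hsR.le
  obtain ⟨g, hg, hg0, hgf, hgA⟩ := exists_blaschke_factorization hρ hsR hf hf0 hA hfρ
  have hfw : f w ≠ 0 := fun hfw => (hd.trans_le (hzeros w hw hfw)).ne' (by simp)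
  refine ⟨g, hg, hg0, hgA, fun z hz hgz => ?_, ?_⟩
  · have hmul := hgf z
    rw [hgz, mul_zero, eq_comm, mul_eq_zero] at hmul
    exact hzeros z hz (hmul.resolve_left (sq_sub_conj_mul_ne_zero (hball hρ) (hball hz)))
  · exact norm_logDeriv_le_add_of_blaschke (mem_ball_zero_iff.1 hρ).le hsR
      (mem_ball_zero_iff.1 (hball hw)) hd (hzeros ρ hρ hfρ)
      (hf.differentiableAt isOpen_ball (hball hw)) (hg.differentiableAt isOpen_ball (hball hw))
      hfw hgf

/-- Landau's lemma. Dividing out a zero of `f` in `ball 0 s` improves `A` by the factor `R / s`, so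
that `log A` pays for all the zeros. -/
lemma norm_logDeriv_le_of_dist_zeros (hrs : r < s) (hsR : s < R) (hd : 0 < d) (hw : ‖w‖ ≤ r)
    (hf : DiffContOnCl ℂ f (ball 0 R)) (hf0 : f 0 ≠ 0)
    (hA : ∀ z ∈ closedBall (0 : ℂ) R, ‖f z‖ ≤ A * ‖f 0‖)
    (hzeros : ∀ ρ ∈ ball (0 : ℂ) s, f ρ = 0 → d ≤ ‖w - ρ‖) :
    ‖logDeriv f w‖ ≤
      (4 * (s + r) / (s - r) ^ 2 + (1 / d + 1 / (R - s)) / Real.log (R / s)) * Real.log A := by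
  have hr : 0 ≤ r := (norm_nonneg w).trans hw
  have hs : 0 < s := hr.trans_lt hrs
  have hq : 1 < R / s := (one_lt_div hs).2 hsR
  have hlogq : 0 < Real.log (R / s) := Real.log_pos hq
  have : 0 < R - s := sub_pos.2 hsR
  have hws : w ∈ ball (0 : ℂ) s := mem_ball_zero_iff.2 (hw.trans_lt hrs)
  have hball : ball (0 : ℂ) s ⊆ ball 0 R := ball_subset_ball hsR.le
  obtain ⟨k, hk⟩ := pow_unbounded_of_one_lt A hq
  induction k generalizing f A with
  | zero =>
    exact absurd (hA 0 (mem_closedBall_self (hs.trans hsR).le))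
      (not_le.2 (mul_lt_of_lt_one_left (norm_pos_iff.2 hf0) (by rwa [pow_zero] at hk)))
  | succ k ih =>
    have hA1 : 1 ≤ A := (le_mul_iff_one_le_left (norm_pos_iff.2 hf0)).1
      (hA 0 (mem_closedBall_self (hs.trans hsR).le))
    by_cases hne : ∀ z ∈ ball (0 : ℂ) s, f z ≠ 0
    · refine (norm_logDeriv_le_of_ne_zero hrs (hf.differentiableOn.mono hball) hne
        (fun z hz => hA z (ball_subset_closedBall (hball hz))) hw).trans ?_
      have := Real.log_nonneg hA1
      gcongr
      exact le_add_of_nonneg_right (by positivity)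
    push Not at hne
    obtain ⟨ρ, hρ, hfρ⟩ := hne
    obtain ⟨g, hg, hg0, hgA, hgzeros, hpeel⟩ :=
      exists_norm_logDeriv_le_add_of_zero hρ hsR hws hd hf hf0 hA hfρ hzeros
    have hrest := ih hg hg0 hgA hgzeros (by rwa [div_lt_iff₀ (by positivity), ← pow_succ])
    rw [Real.log_div (by positivity : A ≠ 0) (zero_lt_one.trans hq).ne'] at hrest
    have hcoef : 0 ≤ 4 * (s + r) / (s - r) ^ 2 * Real.log (R / s) := by positivity
    have hcost := div_mul_cancel₀ (1 / d + 1 / (R - s)) hlogq.ne'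
    linarith

lemma exists_norm_logDeriv_le_of_dist_zeros (r R : ℝ) (hr : 0 ≤ r) (hrR : r < R) :
    ∃ C > 0, ∀ (f : ℂ → ℂ) (c w : ℂ) (A d : ℝ), 0 < d → d ≤ 1 → ‖w - c‖ ≤ r →
      DiffContOnCl ℂ f (ball c R) → f c ≠ 0 → (∀ z ∈ closedBall c R, ‖f z‖ ≤ A * ‖f c‖) →
      (∀ ρ ∈ ball c R, f ρ = 0 → d ≤ ‖w - ρ‖) → ‖logDeriv f w‖ ≤ C * Real.log A / d := by
  obtain ⟨s, hrs, hsR⟩ := exists_between hrR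
  have hs : 0 < s := hr.trans_lt hrs
  have : 0 < s - r := sub_pos.2 hrs
  have : 0 < R - s := sub_pos.2 hsR
  have hlogq : 0 < Real.log (R / s) := Real.log_pos ((one_lt_div hs).2 hsR)
  refine ⟨4 * (s + r) / (s - r) ^ 2 + (1 + 1 / (R - s)) / Real.log (R / s), by positivity,
    fun f c w A d hd hd1 hw hf hfc hA hzeros => ?_⟩
  have hA1 : 1 ≤ A := (le_mul_iff_one_le_left (norm_pos_iff.2 hfc)).1
    (hA c (mem_closedBall_self (hs.trans hsR).le))
  have hlogA := Real.log_nonneg hA1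
  have htranslate : logDeriv (fun z => f (z + c)) (w - c) = logDeriv f w := by
    rw [logDeriv_apply, logDeriv_apply, deriv_comp_add_const, sub_add_cancel]
  have hmaps : Set.MapsTo (· + c) (ball (0 : ℂ) R) (ball c R) := fun z hz => by
    simpa [mem_ball_iff_norm] using hz
  have hlandau := norm_logDeriv_le_of_dist_zeros (f := fun z => f (z + c)) (A := A) hrs hsR hd hw
    (hf.comp (Differentiable.diffContOnCl (by fun_prop)) hmaps) (by simpa using hfc)
    (fun z hz => by simpa using hA (z + c) (by simpa [mem_closedBall_iff_norm] using hz))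
    (fun ρ hρ hfρ => by
      simpa [sub_sub, add_comm] using hzeros (ρ + c) (hmaps (ball_subset_ball hsR.le hρ)) hfρ)
  rw [htranslate] at hlandau
  refine hlandau.trans ?_
  have h1d : 1 ≤ 1 / d := (one_le_div hd).2 hd1
  calc _ ≤ (4 * (s + r) / (s - r) ^ 2 * (1 / d) +
          (1 / d + 1 / (R - s) * (1 / d)) / Real.log (R / s)) * Real.log A := by
        gcongr
        · exact le_mul_of_one_le_right (by positivity) h1d
        · exact le_mul_of_one_le_right (by positivity) h1d
    _ = _ := by ring

end LogarithmicDerivative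

section ZetaGrowth

open MeasureTheory ComplexConjugate

lemma norm_mellin_integrand_le {E : Type*} [NormedAddCommGroup E] [NormedSpace ℂ E] (f : ℝ → E)
    {a b : ℝ} {s : ℂ} (has : a ≤ s.re) (hsb : s.re ≤ b) {t : ℝ} (ht : 0 < t) :
    ‖(t : ℂ) ^ (s - 1) • f t‖ ≤
      ‖(t : ℂ) ^ ((a : ℂ) - 1) • f t‖ + ‖(t : ℂ) ^ ((b : ℂ) - 1) • f t‖ := by
  simp only [norm_smul, norm_cpow_eq_rpow_re_of_pos ht, sub_re, ofReal_re, one_re, ← add_mul]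
  gcongr
  rcases le_total 1 t with h | h
  · exact (Real.rpow_le_rpow_of_exponent_le h (by linarith)).trans
      (le_add_of_nonneg_left (Real.rpow_nonneg ht.le _))
  · exact (Real.rpow_le_rpow_of_exponent_ge ht h (by linarith)).trans
      (le_add_of_nonneg_right (Real.rpow_nonneg ht.le _))

lemma exists_norm_mellin_le {E : Type*} [NormedAddCommGroup E] [NormedSpace ℂ E] {f : ℝ → E}
    {a b : ℝ} (ha : MellinConvergent f a) (hb : MellinConvergent f b) :
    ∃ C : ℝ, ∀ s : ℂ, a ≤ s.re → s.re ≤ b → ‖mellin f s‖ ≤ C :=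
  ⟨_, fun _ has hsb => norm_integral_le_of_norm_le (ha.norm.add hb.norm)
    ((ae_restrict_iff' measurableSet_Ioi).2
      (Eventually.of_forall fun _ ht => norm_mellin_integrand_le f has hsb ht))⟩

lemma exists_norm_Gammaℝ_le {a : ℝ} (ha : 0 < a) (b : ℝ) :
    ∃ C : ℝ, ∀ s : ℂ, a ≤ s.re → s.re ≤ b → ‖Gammaℝ s‖ ≤ C := by
  have hconv {c : ℝ} (hc : 0 < c) : MellinConvergent (fun x => ((Real.exp (-x) : ℝ) : ℂ)) c := by
    simpa only [MellinConvergent, smul_eq_mul, mul_comm] using GammaIntegral_convergent (s := c) hc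
  have hab : 0 < max (a / 2) (b / 2) := lt_max_of_lt_left (half_pos ha)
  obtain ⟨C, hC⟩ := exists_norm_mellin_le (hconv (half_pos ha)) (hconv hab)
  refine ⟨C, fun s has hsb => ?_⟩
  have hGamma : ‖Gamma (s / 2)‖ ≤ C := by
    rw [Gamma_eq_integral (by rw [div_ofNat_re]; linarith), GammaIntegral_eq_mellin]
    exact hC _ (by rw [div_ofNat_re]; linarith)
      (by rw [div_ofNat_re]; exact le_max_of_le_right (by linarith))
  have hpi : ‖(Real.pi : ℂ) ^ (-s / 2)‖ ≤ 1 := by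
    rw [norm_cpow_eq_rpow_re_of_pos Real.pi_pos]
    refine Real.rpow_le_one_of_one_le_of_nonpos (by linarith [Real.pi_gt_three]) ?_
    rw [div_ofNat_re, neg_re]
    linarith
  rw [Gammaℝ_def, norm_mul]
  exact (mul_le_of_le_one_left (norm_nonneg _) hpi).trans hGamma

lemma exists_norm_completedRiemannZeta₀_le (a b : ℝ) :
    ∃ C : ℝ, ∀ s : ℂ, a ≤ s.re → s.re ≤ b → ‖completedRiemannZeta₀ s‖ ≤ C := by
  let P := HurwitzZeta.hurwitzEvenFEPair 0
  have hconv (s : ℂ) : MellinConvergent P.f_modif s :=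
    (P.isStrongFEPair_toStrongFEPair.hasMellin s).1
  obtain ⟨C, hC⟩ := exists_norm_mellin_le (hconv (a / 2 : ℝ)) (hconv (b / 2 : ℝ))
  refine ⟨C / 2, fun s has hsb => ?_⟩
  have hmellin : completedRiemannZeta₀ s = mellin P.f_modif (s / 2) / 2 := rfl
  rw [hmellin, norm_div, norm_ofNat]
  gcongr
  exact hC _ (by rw [div_ofNat_re]; linarith) (by rw [div_ofNat_re]; linarith)

lemma norm_cos_le_exp_abs_im (z : ℂ) : ‖cos z‖ ≤ Real.exp |z.im| := by
  have hplus : ‖exp (z * I)‖ ≤ Real.exp |z.im| := by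
    rw [norm_exp, mul_I_re]
    exact Real.exp_le_exp.2 (neg_le_abs _)
  have hminus : ‖exp (-z * I)‖ ≤ Real.exp |z.im| := by
    rw [norm_exp, mul_I_re, neg_im, neg_neg]
    exact Real.exp_le_exp.2 (le_abs_self _)
  rw [cos, norm_div, norm_ofNat]
  linarith [norm_add_le (exp (z * I)) (exp (-z * I))]

lemma exists_norm_inv_Gammaℝ_le_exp (a : ℝ) {b : ℝ} (hb : b < 2) :
    ∃ C : ℝ, ∀ s : ℂ, a ≤ s.re → s.re ≤ b →
      ‖(Gammaℝ s)⁻¹‖ ≤ C * Real.exp (Real.pi / 2 * |s.im|) := by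
  obtain ⟨C, hC⟩ := exists_norm_Gammaℝ_le (sub_pos.2 hb) (2 - a)
  refine ⟨C, fun s has hsb => ?_⟩
  have hre : (2 - s).re = 2 - s.re := by simp
  have hreflect : Gammaℝ s * Gammaℝ (2 - s) = (cos (Real.pi * (1 - s) / 2))⁻¹ := by
    rw [← Gammaℝ_one_sub_mul_Gammaℝ_one_add, sub_sub_cancel]
    ring_nf
  have hbound : ‖Gammaℝ (2 - s)‖ ≤ C := hC _ (by linarith) (by linarith)
  by_cases hs : Gammaℝ s = 0
  · rw [hs, inv_zero, norm_zero]
    exact mul_nonneg ((norm_nonneg _).trans hbound) (Real.exp_pos _).le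
  have hs' : Gammaℝ (2 - s) ≠ 0 := Gammaℝ_ne_zero_of_re_pos (by linarith)
  have hinv : (Gammaℝ s)⁻¹ = Gammaℝ (2 - s) * cos (Real.pi * (1 - s) / 2) := by
    rw [← inv_inv (cos _), ← hreflect, mul_inv, mul_comm (Gammaℝ s)⁻¹, mul_inv_cancel_left₀ hs']
  have him : |(Real.pi * (1 - s) / 2 : ℂ).im| = Real.pi / 2 * |s.im| := by
    rw [div_ofNat_im, im_ofReal_mul, abs_div, abs_mul]
    simp only [sub_im, one_im, zero_sub, abs_neg, abs_of_pos Real.pi_pos, Nat.abs_ofNat]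
    ring
  rw [hinv, norm_mul, ← him]
  exact mul_le_mul hbound (norm_cos_le_exp_abs_im _) (norm_nonneg _)
    ((norm_nonneg _).trans hbound)

lemma exists_norm_riemannZeta_le_exp (a : ℝ) {b : ℝ} (hb : b < 2) :
    ∃ C : ℝ, ∀ s : ℂ, a ≤ s.re → s.re ≤ b → 1 ≤ |s.im| →
      ‖riemannZeta s‖ ≤ C * Real.exp (Real.pi / 2 * |s.im|) := by
  obtain ⟨C₁, hC₁⟩ := exists_norm_completedRiemannZeta₀_le a b
  obtain ⟨C₂, hC₂⟩ := exists_norm_inv_Gammaℝ_le_exp a hb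
  refine ⟨(C₁ + 1 + 1) * C₂, fun s has hsb him => ?_⟩
  have hs : s ≠ 0 := fun h => by norm_num [h] at him
  have hinv {z : ℂ} (hz : 1 ≤ |z.im|) : ‖1 / z‖ ≤ 1 := by
    rw [norm_div, norm_one]
    exact div_le_one_of_le₀ (hz.trans (abs_im_le_norm z)) (norm_nonneg z)
  have hcompleted : ‖completedRiemannZeta s‖ ≤ C₁ + 1 + 1 := by
    rw [completedRiemannZeta_eq]
    exact (norm_sub_le _ _).trans (add_le_add ((norm_sub_le _ _).trans
      (add_le_add (hC₁ s has hsb) (hinv him))) (hinv (by simpa using him)))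
  rw [riemannZeta_def_of_ne_zero hs, div_eq_mul_inv, norm_mul, mul_assoc]
  exact mul_le_mul hcompleted (hC₂ s has hsb) (norm_nonneg _) ((norm_nonneg _).trans hcompleted)

lemma norm_le_norm_of_abs_re_le_of_abs_im_le {z w : ℂ} (hre : |z.re| ≤ |w.re|)
    (him : |z.im| ≤ |w.im|) : ‖z‖ ≤ ‖w‖ := by
  rw [norm_eq_sqrt_sq_add_sq, norm_eq_sqrt_sq_add_sq]
  exact Real.sqrt_le_sqrt (add_le_add (sq_le_sq.2 hre) (sq_le_sq.2 him))

lemma norm_Gammaℝ_conj (s : ℂ) : ‖Gammaℝ (conj s)‖ = ‖Gammaℝ s‖ := by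
  have hdiv : conj s / 2 = conj (s / 2) := by rw [map_div₀, map_ofNat]
  rw [Gammaℝ_def, Gammaℝ_def, hdiv, Gamma_conj, norm_mul, norm_mul, RCLike.norm_conj,
    norm_cpow_eq_rpow_re_of_pos Real.pi_pos, norm_cpow_eq_rpow_re_of_pos Real.pi_pos]
  simp

lemma norm_Gammaℝ_one_sub_le (m : ℕ) {s : ℂ} (hs : s.re = 1 / 2 - 2 * m) :
    ‖Gammaℝ (1 - s)‖ ≤ ‖1 - s‖ ^ (2 * m) * ‖Gammaℝ s‖ := by
  induction m generalizing s with
  | zero =>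
    have hconj : 1 - s = conj s := by
      apply Complex.ext
      · rw [sub_re, one_re, conj_re, hs]
        norm_num
      · simp
    rw [hconj, norm_Gammaℝ_conj]
    simp
  | succ m ih =>
    push_cast at hs
    have : (0 : ℝ) ≤ m := m.cast_nonneg
    have hs0 : s ≠ 0 := fun h => by rw [h, zero_re] at hs; linarith
    have hre : (1 - (s + 2)).re = 1 / 2 + 2 * m := by
      rw [sub_re, one_re, add_re, re_ofNat, hs]
      ring
    have hs1 : 1 - (s + 2) ≠ 0 := fun h => by rw [h, zero_re] at hre; linarith
    have hnorm : ‖1 - (s + 2)‖ ≤ ‖1 - s‖ := norm_le_norm_of_abs_re_le_of_abs_im_le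
      (by rw [hre, sub_re, one_re, hs]; exact abs_le_abs_of_nonneg (by linarith) (by linarith))
      (by simp)
    have hnorm' : ‖s‖ ≤ ‖1 - s‖ := norm_le_norm_of_abs_re_le_of_abs_im_le
      (by rw [← abs_neg]; exact abs_le_abs_of_nonneg (by linarith) (by simp)) (by simp)
    have hpi : 1 ≤ 2 * Real.pi := by linarith [Real.pi_gt_three]
    have hdiv {x y : ℂ} : ‖x * y / 2 / Real.pi‖ ≤ ‖x‖ * ‖y‖ := by
      rw [div_div, norm_div, norm_mul]
      refine div_le_self (by positivity) ?_
      simpa [abs_of_pos Real.pi_pos] using hpi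
    have hih := ih (s := s + 2) (by rw [add_re, re_ofNat, hs]; ring)
    rw [Gammaℝ_add_two hs0] at hih
    calc ‖Gammaℝ (1 - s)‖ = ‖Gammaℝ (1 - (s + 2)) * (1 - (s + 2)) / 2 / Real.pi‖ := by
          rw [← Gammaℝ_add_two hs1]
          ring_nf
      _ ≤ ‖Gammaℝ (1 - (s + 2))‖ * ‖1 - (s + 2)‖ := hdiv
      _ ≤ ‖1 - (s + 2)‖ ^ (2 * m) * (‖Gammaℝ s‖ * ‖s‖) * ‖1 - (s + 2)‖ := by
          gcongr
          exact hih.trans (by gcongr; exact hdiv)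
      _ ≤ ‖1 - s‖ ^ (2 * m) * (‖Gammaℝ s‖ * ‖1 - s‖) * ‖1 - s‖ := by gcongr
      _ = ‖1 - s‖ ^ (2 * (m + 1)) * ‖Gammaℝ s‖ := by ring

lemma norm_riemannZeta_le_of_re_eq (m : ℕ) {s : ℂ} (hs : s.re = 1 / 2 - 2 * m) :
    ‖riemannZeta s‖ ≤ ‖1 - s‖ ^ (2 * m) * ‖riemannZeta (1 - s)‖ := by
  have : (0 : ℝ) ≤ m := m.cast_nonneg
  have hs0 : s ≠ 0 := fun h => by
    rw [h, zero_re] at hs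
    have hparity : 4 * m = 1 := by exact_mod_cast (by linarith : (4 * m : ℝ) = 1)
    omega
  have hre : 0 < (1 - s).re := by rw [sub_re, one_re]; linarith
  have hs1 : 1 - s ≠ 0 := fun h => by simp [h] at hre
  have hGamma : Gammaℝ (1 - s) ≠ 0 := Gammaℝ_ne_zero_of_re_pos hre
  have hfe : riemannZeta s = Gammaℝ (1 - s) * riemannZeta (1 - s) / Gammaℝ s := by
    rw [riemannZeta_def_of_ne_zero hs0, riemannZeta_def_of_ne_zero hs1,
      completedRiemannZeta_one_sub, mul_div_cancel₀ _ hGamma]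
  rw [hfe, norm_div, norm_mul]
  refine div_le_of_le_mul₀ (norm_nonneg _) (by positivity) ?_
  calc ‖Gammaℝ (1 - s)‖ * ‖riemannZeta (1 - s)‖
      ≤ ‖1 - s‖ ^ (2 * m) * ‖Gammaℝ s‖ * ‖riemannZeta (1 - s)‖ := by
        gcongr
        exact norm_Gammaℝ_one_sub_le m hs
    _ = _ := by ring

lemma exists_norm_LSeries_le {f : ℕ → ℂ} {σ₀ : ℝ} (hf : LSeriesSummable f σ₀) :
    ∃ C : ℝ, ∀ s : ℂ, σ₀ ≤ s.re → ‖LSeries f s‖ ≤ C :=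
  ⟨_, fun _ hs => tsum_of_norm_bounded hf.norm.hasSum
    (LSeries.norm_term_le_of_re_le_re f (by simpa using hs))⟩

lemma exists_norm_riemannZeta_le {σ₀ : ℝ} (hσ₀ : 1 < σ₀) :
    ∃ C : ℝ, ∀ s : ℂ, σ₀ ≤ s.re → ‖riemannZeta s‖ ≤ C := by
  obtain ⟨C, hC⟩ := exists_norm_LSeries_le (LSeriesSummable_one_iff.2 ((ofReal_re σ₀).symm ▸ hσ₀))
  exact ⟨C, fun s hs => by
    rw [← LSeries_one_eq_riemannZeta (hσ₀.trans_le hs)]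
    exact hC s hs⟩

lemma exists_le_norm_riemannZeta {σ₀ : ℝ} (hσ₀ : 1 < σ₀) :
    ∃ c > 0, ∀ s : ℂ, σ₀ ≤ s.re → c ≤ ‖riemannZeta s‖ := by
  obtain ⟨C, hC⟩ := exists_norm_LSeries_le
    (ArithmeticFunction.LSeriesSummable_moebius_iff.2 ((ofReal_re σ₀).symm ▸ hσ₀))
  have hprod {s : ℂ} (hs : σ₀ ≤ s.re) : 1 ≤ ‖riemannZeta s‖ * C := by
    have hs1 := hσ₀.trans_le hs
    have hinv := LSeries_one_mul_Lseries_moebius hs1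
    rw [LSeries_one_eq_riemannZeta hs1] at hinv
    rw [← norm_one (α := ℂ), ← hinv, norm_mul]
    gcongr
    exact hC s hs
  have hC0 : 0 < C := pos_of_mul_pos_right
    (zero_lt_one.trans_le (hprod (ofReal_re σ₀).ge)) (norm_nonneg _)
  exact ⟨1 / C, one_div_pos.2 hC0, fun s hs => (div_le_iff₀ hC0).2 (hprod hs)⟩

lemma exists_norm_logDeriv_riemannZeta_le_of_one_lt_re {σ₀ : ℝ} (hσ₀ : 1 < σ₀) :
    ∃ C : ℝ, ∀ s : ℂ, σ₀ ≤ s.re → ‖logDeriv riemannZeta s‖ ≤ C := by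
  obtain ⟨C, hC⟩ := exists_norm_LSeries_le
    (ArithmeticFunction.LSeriesSummable_vonMangoldt (s := (σ₀ : ℂ)) hσ₀)
  refine ⟨C, fun s hs => ?_⟩
  rw [logDeriv_apply, ← norm_neg, ← neg_div,
    ← ArithmeticFunction.LSeries_vonMangoldt_eq_deriv_riemannZeta_div (hσ₀.trans_le hs)]
  exact hC s hs

lemma isBigO_exp_mul_exp_of_isBigO_exp {f : ℂ → ℂ} {l : Filter ℂ} {c k : ℝ} (hc : 0 < c)
    (hk : 0 ≤ k) (hf : f =O[l] fun z => Real.exp (k * |z.im|)) :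
    f =O[l] fun z => Real.exp (k / c * Real.exp (c * |z.im|)) := by
  refine hf.trans (Asymptotics.IsBigO.of_norm_le fun z => ?_)
  rw [Real.norm_of_nonneg (Real.exp_pos _).le, Real.exp_le_exp]
  calc k * |z.im| = k / c * (c * |z.im|) := by field_simp
    _ ≤ k / c * Real.exp (c * |z.im|) := by
        gcongr
        linarith [Real.add_one_le_exp (c * |z.im|)]

/-- The Phragmén–Lindelöf principle applied to `f z / (z + p) ^ n`. -/
lemma norm_le_mul_pow_of_vertical_strip {f : ℂ → ℂ} {a b p k C : ℝ} {n : ℕ} (hab : a < b)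
    (hap : 0 < a + p) (hk : 0 ≤ k) (hf : DiffContOnCl ℂ f (re ⁻¹' Set.Ioo a b))
    (hgrowth : f =O[comap (_root_.abs ∘ im) atTop ⊓ 𝓟 (re ⁻¹' Set.Ioo a b)]
      fun z => Real.exp (k * |z.im|))
    (ha : ∀ z : ℂ, z.re = a → ‖f z‖ ≤ C * ‖z + p‖ ^ n)
    (hb : ∀ z : ℂ, z.re = b → ‖f z‖ ≤ C * ‖z + p‖ ^ n) {z : ℂ} (hza : a ≤ z.re)
    (hzb : z.re ≤ b) : ‖f z‖ ≤ C * ‖z + p‖ ^ n := by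
  have hnorm {z : ℂ} (hz : a ≤ z.re) : a + p ≤ ‖z + p‖ :=
    (add_le_add_left hz p).trans ((by simp : z.re + p = (z + p).re).trans_le (re_le_norm _))
  have hpos {z : ℂ} (hz : a ≤ z.re) : 0 < ‖z + p‖ ^ n := pow_pos (hap.trans_le (hnorm hz)) n
  have hclosure : closure (re ⁻¹' Set.Ioo a b) ⊆ {z : ℂ | a ≤ z.re} :=
    closure_minimal (fun z hz => hz.1.le) (isClosed_le continuous_const continuous_re)
  have hquot : DiffContOnCl ℂ (fun z : ℂ => ((z + p) ^ n)⁻¹ • f z) (re ⁻¹' Set.Ioo a b) :=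
    (DiffContOnCl.inv (Differentiable.diffContOnCl (by fun_prop)) fun z hz =>
      norm_pos_iff.1 (by rw [norm_pow]; exact hpos (hclosure hz))).smul hf
  have hbounded : (fun z : ℂ => ((z + p) ^ n)⁻¹) =O[comap (_root_.abs ∘ im) atTop ⊓
      𝓟 (re ⁻¹' Set.Ioo a b)] fun _ => (1 : ℝ) := by
    refine Asymptotics.IsBigO.of_bound ((a + p) ^ n)⁻¹ (mem_inf_of_right fun z hz => ?_)
    rw [Set.mem_ofPred_eq, norm_inv, norm_pow, norm_one, mul_one]
    gcongr
    exact hnorm hz.1.le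
  have hquotGrowth := hbounded.smul hgrowth
  simp only [one_smul] at hquotGrowth
  have hedge {z : ℂ} (hz : a ≤ z.re) :
      ‖((z + p) ^ n)⁻¹ • f z‖ ≤ C ↔ ‖f z‖ ≤ C * ‖z + p‖ ^ n := by
    rw [norm_smul, norm_inv, norm_pow, inv_mul_le_iff₀' (hpos hz)]
  have hba : 0 < b - a := sub_pos.2 hab
  refine (hedge hza).1 (PhragmenLindelof.vertical_strip
    (f := fun z : ℂ => ((z + p) ^ n)⁻¹ • f z) hquot
    ⟨1 / (b - a), by gcongr; linarith [Real.pi_gt_three], _,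
      isBigO_exp_mul_exp_of_isBigO_exp (one_div_pos.2 hba) hk hquotGrowth⟩
    (fun z hz => (hedge hz.ge).2 (ha z hz)) (fun z hz => (hedge ?_).2 (hb z hz)) hza hzb)
  exact hab.le.trans hz.ge

/-- The entire function `(s - 1) ζ(s)`, whose removable singularity at `1` is filled in by the
residue of `ζ`. It serves to apply the Phragmén–Lindelöf principle in strips that contain `1`. -/
noncomputable def poleFreeZeta : ℂ → ℂ :=
  Function.update (fun s => (s - 1) * riemannZeta s) 1 1

lemma poleFreeZeta_of_ne_one {s : ℂ} (hs : s ≠ 1) : poleFreeZeta s = (s - 1) * riemannZeta s :=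
  Function.update_of_ne hs _ _

lemma differentiable_poleFreeZeta : Differentiable ℂ poleFreeZeta := by
  rw [← differentiableOn_univ, ← differentiableOn_compl_singleton_and_continuousAt_iff (c := 1)
    univ_mem, ← Set.compl_eq_univ_sdiff]
  refine ⟨DifferentiableOn.congr (fun s hs => ?_) fun s hs => poleFreeZeta_of_ne_one hs,
    continuousAt_update_same.2 riemannZeta_residue_one⟩
  exact ((differentiableAt_id.sub_const 1).mul
    (differentiableAt_riemannZeta hs)).differentiableWithinAt

lemma isBigO_poleFreeZeta_exp (a : ℝ) {b : ℝ} (hb : b < 2) :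
    poleFreeZeta =O[comap (_root_.abs ∘ im) atTop ⊓ 𝓟 (re ⁻¹' Set.Ioo a b)]
      fun z => Real.exp ((1 + Real.pi / 2) * |z.im|) := by
  obtain ⟨C, hC⟩ := exists_norm_riemannZeta_le_exp a hb
  refine Asymptotics.IsBigO.of_bound ((|a| + |b| + 2) * C) ?_
  filter_upwards [mem_inf_of_left (preimage_mem_comap (Ici_mem_atTop 1)),
    mem_inf_of_right (mem_principal_self _)] with s him ⟨has, hsb⟩
  have him : 1 ≤ |s.im| := him
  have hs : s ≠ 1 := fun h => by norm_num [h] at him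
  have hlinear : ‖s - 1‖ ≤ (|a| + |b| + 2) * Real.exp |s.im| := by
    have hre : |s.re| ≤ |a| + |b| := abs_le.2
      ⟨by linarith [neg_abs_le a, abs_nonneg b], by linarith [le_abs_self b, abs_nonneg a]⟩
    calc ‖s - 1‖ ≤ |a| + |b| + 1 + |s.im| := by
          linarith [norm_sub_le s 1, norm_one (α := ℂ), norm_le_abs_re_add_abs_im s]
      _ ≤ (|a| + |b| + 2) * (|s.im| + 1) := by
          nlinarith [abs_nonneg a, abs_nonneg b, abs_nonneg s.im]
      _ ≤ (|a| + |b| + 2) * Real.exp |s.im| := by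
          gcongr
          exact Real.add_one_le_exp _
  rw [poleFreeZeta_of_ne_one hs, norm_mul, Real.norm_of_nonneg (Real.exp_pos _).le]
  calc ‖s - 1‖ * ‖riemannZeta s‖
      ≤ (|a| + |b| + 2) * Real.exp |s.im| * (C * Real.exp (Real.pi / 2 * |s.im|)) := by
        gcongr
        exact hC s has.le hsb.le him
    _ = _ := by
        rw [add_mul 1, one_mul, Real.exp_add]
        ring

lemma norm_one_sub_eq_norm_add {s : ℂ} {p : ℝ} (hs : 2 * s.re + p = 1) : ‖1 - s‖ = ‖s + p‖ := by
  have hconj : 1 - s = conj (s + p) := by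
    apply Complex.ext
    · rw [sub_re, one_re, conj_re, add_re, ofReal_re]
      linarith
    · simp
  rw [hconj, RCLike.norm_conj]

lemma exists_norm_poleFreeZeta_le_pow {m : ℕ} (hm : m ≠ 0) :
    ∃ C : ℝ, ∀ s : ℂ, 1 / 2 - 2 * (m : ℝ) ≤ s.re → s.re ≤ 3 / 2 →
      ‖poleFreeZeta s‖ ≤ C * ‖s + (4 * m : ℝ)‖ ^ (2 * m + 1) := by
  have hm1 : (1 : ℝ) ≤ m := Nat.one_le_cast.2 (Nat.one_le_iff_ne_zero.2 hm)
  obtain ⟨C, hC⟩ := exists_norm_riemannZeta_le (show (1 : ℝ) < 3 / 2 by norm_num)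
  have hC0 : 0 ≤ C := (norm_nonneg _).trans (hC 2 (by norm_num))
  refine ⟨C, fun s => norm_le_mul_pow_of_vertical_strip (by linarith) (by linarith)
    (by positivity) differentiable_poleFreeZeta.diffContOnCl
    (isBigO_poleFreeZeta_exp _ (by norm_num)) (fun z hz => ?_) fun z hz => ?_⟩
  · have hnorm : ‖1 - z‖ = ‖z + (4 * m : ℝ)‖ := norm_one_sub_eq_norm_add (by rw [hz]; ring)
    have hne : z ≠ 1 := fun h => by rw [h, one_re] at hz; linarith
    have hzeta := norm_riemannZeta_le_of_re_eq m hz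
    rw [poleFreeZeta_of_ne_one hne, norm_mul, norm_sub_rev, hnorm]
    rw [hnorm] at hzeta
    calc ‖z + (4 * m : ℝ)‖ * ‖riemannZeta z‖
        ≤ ‖z + (4 * m : ℝ)‖ * (‖z + (4 * m : ℝ)‖ ^ (2 * m) * C) := by
          gcongr
          refine hzeta.trans ?_
          gcongr
          exact hC _ (by rw [sub_re, one_re]; linarith)
      _ = _ := by ring
  · have hne : z ≠ 1 := fun h => by norm_num [h] at hz
    have hre : (z + (4 * m : ℝ)).re = 3 / 2 + 4 * m := by rw [add_re, ofReal_re, hz]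
    have hone : 1 ≤ ‖z + (4 * m : ℝ)‖ := le_trans (by linarith) (re_le_norm _)
    have hnorm : ‖z - 1‖ ≤ ‖z + (4 * m : ℝ)‖ := norm_le_norm_of_abs_re_le_of_abs_im_le
      (by rw [hre, sub_re, hz, one_re]; exact abs_le_abs_of_nonneg (by norm_num) (by linarith))
      (by simp)
    rw [poleFreeZeta_of_ne_one hne, norm_mul]
    calc ‖z - 1‖ * ‖riemannZeta z‖ ≤ ‖z + (4 * m : ℝ)‖ * C := by
          gcongr
          exact hC z hz.ge
      _ ≤ C * ‖z + (4 * m : ℝ)‖ ^ (2 * m + 1) := by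
          rw [mul_comm]
          gcongr
          exact le_self_pow₀ hone (by omega)

lemma exists_norm_riemannZeta_le_pow (a : ℝ) :
    ∃ (C : ℝ) (N : ℕ), ∀ s : ℂ, a ≤ s.re → 1 ≤ |s.im| → ‖riemannZeta s‖ ≤ C * |s.im| ^ N := by
  obtain ⟨m, hm⟩ := exists_nat_gt (max 1 (-a))
  rw [max_lt_iff] at hm
  obtain ⟨C₁, hC₁⟩ := exists_norm_poleFreeZeta_le_pow (m := m) (by rintro rfl; norm_num at hm)
  obtain ⟨C₂, hC₂⟩ := exists_norm_riemannZeta_le (show (1 : ℝ) < 3 / 2 by norm_num)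
  refine ⟨max (C₁ * (4 * m + 3) ^ (2 * m + 1)) C₂, 2 * m + 1, fun s has him => ?_⟩
  rcases le_total (3 / 2) s.re with hs | hs
  · have hbound := (hC₂ s hs).trans (le_max_right (C₁ * (4 * m + 3) ^ (2 * m + 1)) C₂)
    exact hbound.trans (le_mul_of_one_le_right ((norm_nonneg _).trans hbound)
      (one_le_pow₀ him))
  have hne : s ≠ 1 := fun h => by norm_num [h] at him
  have hpoleFree := hC₁ s (by linarith) hs
  have hshift : 0 < ‖s + (4 * m : ℝ)‖ := lt_of_lt_of_le
    (by rw [add_re, ofReal_re]; linarith) (re_le_norm _)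
  have hC₁0 : 0 ≤ C₁ := nonneg_of_mul_nonneg_left ((norm_nonneg _).trans hpoleFree)
    (pow_pos hshift _)
  have hlinear : ‖s + (4 * m : ℝ)‖ ≤ (4 * m + 3) * |s.im| := by
    have hre : |(s + (4 * m : ℝ)).re| ≤ 4 * m + 2 := by
      rw [add_re, ofReal_re, abs_le]
      constructor <;> linarith
    calc ‖s + (4 * m : ℝ)‖ ≤ 4 * m + 2 + |s.im| := by
          simpa using (norm_le_abs_re_add_abs_im _).trans (add_le_add_left hre _)
      _ ≤ (4 * m + 3) * |s.im| := by nlinarith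
  have hone : 1 ≤ ‖s - 1‖ := him.trans (by simpa using abs_im_le_norm (s - 1))
  calc ‖riemannZeta s‖ ≤ ‖poleFreeZeta s‖ := by
        rw [poleFreeZeta_of_ne_one hne, norm_mul]
        exact le_mul_of_one_le_left (norm_nonneg _) hone
    _ ≤ C₁ * ((4 * m + 3) * |s.im|) ^ (2 * m + 1) := hpoleFree.trans (by gcongr)
    _ = C₁ * (4 * m + 3) ^ (2 * m + 1) * |s.im| ^ (2 * m + 1) := by rw [mul_pow, mul_assoc]
    _ ≤ _ := by gcongr; exact le_max_left _ _

end ZetaGrowth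

section LogarithmicDerivativeOfZeta

open Metric

lemma isNontrivialZero_of_im_ne_zero {ρ : ℂ} (hρ : riemannZeta ρ = 0) (him : ρ.im ≠ 0) :
    IsNontrivialZero ρ := by
  have hre : ρ.re < 1 := not_le.1 fun h => riemannZeta_ne_zero_of_one_le_re h hρ
  refine ⟨hρ, not_le.1 fun hre0 => ?_, hre⟩
  have hne : ρ ≠ 0 := fun h => him (by rw [h, zero_im])
  have hne' : 1 - ρ ≠ 0 := fun h => him (by simpa using congrArg im h)
  have hGamma : Gammaℝ ρ ≠ 0 := fun h => by
    obtain ⟨n, rfl⟩ := Gammaℝ_eq_zero_iff.1 h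
    simp at him
  rw [riemannZeta_def_of_ne_zero hne, div_eq_zero_iff, or_iff_left hGamma] at hρ
  refine riemannZeta_ne_zero_of_one_le_re (s := 1 - ρ) (by rw [sub_re, one_re]; linarith) ?_
  rw [riemannZeta_def_of_ne_zero hne', completedRiemannZeta_one_sub, hρ, zero_div]

lemma exists_norm_riemannZeta_le_mul_norm_of_dist_le (R : ℝ) :
    ∃ (T₀ : ℝ) (N : ℕ), ∀ c z : ℂ, c.re = 2 → T₀ ≤ |c.im| → ‖z - c‖ ≤ R →
      ‖riemannZeta z‖ ≤ |c.im| ^ N * ‖riemannZeta c‖ := by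
  obtain ⟨B, N, hB⟩ := exists_norm_riemannZeta_le_pow (2 - R)
  obtain ⟨b, hb, hlower⟩ := exists_le_norm_riemannZeta one_lt_two
  refine ⟨max (|R| + 1) (|B| * 2 ^ N / b), N + 1, fun c z hc hT hz => ?_⟩
  have hT₁ := (le_max_left _ _).trans hT
  have hT₂ := (div_le_iff₀ hb).1 ((le_max_right _ _).trans hT)
  have hre := (abs_re_le_norm (z - c)).trans hz
  have him := (abs_im_le_norm (z - c)).trans hz
  rw [sub_re, hc, abs_le] at hre
  rw [sub_im] at him
  have hupper := abs_sub_abs_le_abs_sub z.im c.im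
  have hlower' := abs_sub_abs_le_abs_sub c.im z.im
  rw [abs_sub_comm] at hlower'
  have hR := le_abs_self R
  calc ‖riemannZeta z‖ ≤ B * |z.im| ^ N := hB z (by linarith) (by linarith)
    _ ≤ |B| * (2 * |c.im|) ^ N := by
        gcongr
        · exact le_abs_self B
        · linarith
    _ = |B| * 2 ^ N * |c.im| ^ N := by rw [mul_pow, mul_assoc]
    _ ≤ |c.im| * b * |c.im| ^ N := by gcongr
    _ ≤ |c.im| * ‖riemannZeta c‖ * |c.im| ^ N := by gcongr; exact hlower c hc.ge
    _ = |c.im| ^ (N + 1) * ‖riemannZeta c‖ := by ring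

lemma exists_norm_logDeriv_riemannZeta_le_of_re_le_two (a : ℝ) :
    ∃ C > 0, ∃ T₀ : ℝ, ∀ (w : ℂ) (d : ℝ), a ≤ w.re → w.re ≤ 2 → T₀ ≤ |w.im| → 0 < d → d ≤ 1 →
      (∀ ρ, IsNontrivialZero ρ → d ≤ ‖w - ρ‖) →
      ‖logDeriv riemannZeta w‖ ≤ C * Real.log |w.im| / d := by
  obtain ⟨C, hC, hlandau⟩ := exists_norm_logDeriv_le_of_dist_zeros |2 - a| (|2 - a| + 1)
    (abs_nonneg _) (lt_add_one _)
  obtain ⟨T₀, N, hgrowth⟩ := exists_norm_riemannZeta_le_mul_norm_of_dist_le (|2 - a| + 1)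
  refine ⟨C * (N + 1), by positivity, max T₀ (|2 - a| + 2), fun w d haw hw2 hT hd hd1 hzeros => ?_⟩
  obtain ⟨hT₁, hT₂⟩ := max_le_iff.1 hT
  have him0 : 1 ≤ |w.im| := by linarith [abs_nonneg (2 - a)]
  set c : ℂ := ⟨2, w.im⟩
  have hwc : ‖w - c‖ ≤ |2 - a| := by
    have hreal : w - c = ((w.re - 2 : ℝ) : ℂ) := by apply Complex.ext <;> simp [c]
    rw [hreal, norm_real, Real.norm_eq_abs, abs_sub_comm]
    exact abs_le_abs_of_nonneg (by linarith) (by linarith)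
  have him {z : ℂ} (hz : z ∈ closedBall c (|2 - a| + 1)) : z.im ≠ 0 := fun h => by
    have := (abs_im_le_norm (z - c)).trans (mem_closedBall_iff_norm.1 hz)
    rw [sub_im, h, zero_sub, abs_neg] at this
    linarith
  have hdiff : DifferentiableOn ℂ riemannZeta (closedBall c (|2 - a| + 1)) := fun z hz =>
    (differentiableAt_riemannZeta fun h => him hz (by rw [h, one_im])).differentiableWithinAt
  have hbound := hlandau riemannZeta c w (|w.im| ^ N) d hd hd1 hwc
    (hdiff.diffContOnCl_ball subset_rfl) (riemannZeta_ne_zero_of_one_le_re one_le_two)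
    (fun z hz => hgrowth c z rfl hT₁ (mem_closedBall_iff_norm.1 hz))
    (fun ρ hρ hζ => hzeros ρ (isNontrivialZero_of_im_ne_zero hζ (him (ball_subset_closedBall hρ))))
  refine hbound.trans ?_
  have hlog := Real.log_nonneg him0
  rw [Real.log_pow, mul_assoc]
  gcongr
  linarith

lemma exists_norm_logDeriv_riemannZeta_le (a : ℝ) :
    ∃ C > 0, ∃ T₀ : ℝ, ∀ (w : ℂ) (d : ℝ), a ≤ w.re → T₀ ≤ |w.im| → 0 < d → d ≤ 1 →
      (∀ ρ, IsNontrivialZero ρ → d ≤ ‖w - ρ‖) →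
      ‖logDeriv riemannZeta w‖ ≤ C * Real.log |w.im| / d := by
  obtain ⟨C₁, hC₁, T₁, hleft⟩ := exists_norm_logDeriv_riemannZeta_le_of_re_le_two a
  obtain ⟨C₂, hright⟩ := exists_norm_logDeriv_riemannZeta_le_of_one_lt_re one_lt_two
  refine ⟨max C₁ C₂, lt_max_of_lt_left hC₁, max T₁ (Real.exp 1),
    fun w d haw hT hd hd1 hzeros => ?_⟩
  obtain ⟨hT₁, hT₂⟩ := max_le_iff.1 hT
  have hlog : 1 ≤ Real.log |w.im| :=
    (Real.le_log_iff_exp_le ((Real.exp_pos 1).trans_le hT₂)).2 hT₂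
  rcases le_total w.re 2 with hw | hw
  · refine (hleft w d haw hw hT₁ hd hd1 hzeros).trans ?_
    gcongr
    exact le_max_left _ _
  · have hmax : 0 ≤ max C₁ C₂ := hC₁.le.trans (le_max_left _ _)
    calc ‖logDeriv riemannZeta w‖ ≤ max C₁ C₂ := (hright w hw).trans (le_max_right _ _)
      _ ≤ max C₁ C₂ * Real.log |w.im| := le_mul_of_one_le_right hmax hlog
      _ ≤ max C₁ C₂ * Real.log |w.im| / d := le_div_self (by positivity) hd hd1

lemma differentiableOn_logDeriv_riemannZeta_ball {w : ℂ} {d : ℝ} (him : d ≤ |w.im|)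
    (hzeros : ∀ ρ, IsNontrivialZero ρ → d ≤ ‖w - ρ‖) :
    DifferentiableOn ℂ (logDeriv riemannZeta) (ball w d) := by
  have him0 : ∀ z ∈ ball w d, z.im ≠ 0 := fun z hz h => by
    have := abs_im_le_norm (w - z)
    rw [sub_im, h, sub_zero] at this
    linarith [mem_ball_iff_norm'.1 hz]
  have hζ : DifferentiableOn ℂ riemannZeta (ball w d) := fun z hz =>
    (differentiableAt_riemannZeta fun h => him0 z hz (by rw [h, one_im])).differentiableWithinAt
  exact (hζ.deriv isOpen_ball).div hζ fun z hz h =>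
    (hzeros z (isNontrivialZero_of_im_ne_zero h (him0 z hz))).not_gt (mem_ball_iff_norm'.1 hz)

lemma exists_norm_iteratedDeriv_logDeriv_riemannZeta_le (a : ℝ) (n : ℕ) :
    ∃ C > 0, ∃ T₀ : ℝ, ∀ (w : ℂ) (d : ℝ), a ≤ w.re → T₀ ≤ |w.im| → 0 < d → d ≤ 1 →
      (∀ ρ, IsNontrivialZero ρ → d ≤ ‖w - ρ‖) →
      ‖iteratedDeriv n (logDeriv riemannZeta) w‖ ≤ C * Real.log |w.im| / d ^ (n + 1) := by
  obtain ⟨C, hC, T₀, hbound⟩ := exists_norm_logDeriv_riemannZeta_le (a - 1)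
  refine ⟨n.factorial * (C * 2 * 2) * 2 ^ n, by positivity, max (T₀ + 1) 2,
    fun w d haw hT hd hd1 hzeros => ?_⟩
  obtain ⟨hT₁, hT₂⟩ := max_le_iff.1 hT
  have hdist {z : ℂ} (hz : z ∈ closedBall w (d / 2)) {ρ : ℂ} (hρ : IsNontrivialZero ρ) :
      d / 2 ≤ ‖z - ρ‖ := by
    linarith [hzeros ρ hρ, norm_sub_le_norm_sub_add_norm_sub w z ρ, mem_closedBall_iff_norm'.1 hz]
  have hre {z : ℂ} (hz : z ∈ closedBall w (d / 2)) : a - 1 ≤ z.re := by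
    have := (neg_le_abs _).trans ((abs_re_le_norm (z - w)).trans (mem_closedBall_iff_norm.1 hz))
    rw [sub_re] at this
    linarith
  have him {z : ℂ} (hz : z ∈ closedBall w (d / 2)) : |(|z.im| - |w.im|)| ≤ 1 := by
    have := (abs_im_le_norm (z - w)).trans (mem_closedBall_iff_norm.1 hz)
    rw [sub_im] at this
    linarith [abs_abs_sub_abs_le z.im w.im]
  have hcont : DiffContOnCl ℂ (logDeriv riemannZeta) (ball w (d / 2)) :=
    (differentiableOn_logDeriv_riemannZeta_ball (by linarith) hzeros).diffContOnCl_ball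
      (closedBall_subset_ball (half_lt_self hd))
  have hsphere : ∀ z ∈ sphere w (d / 2), ‖logDeriv riemannZeta z‖ ≤
      C * (2 * Real.log |w.im|) / (d / 2) := fun z hz => by
    have hz' := sphere_subset_closedBall hz
    have := abs_le.1 (him hz')
    refine (hbound z (d / 2) (hre hz') (by linarith) (by linarith) (by linarith)
      fun ρ hρ => hdist hz' hρ).trans ?_
    have hlog : Real.log |z.im| ≤ 2 * Real.log |w.im| := by
      rw [← Nat.cast_ofNat, ← Real.log_pow]
      exact Real.log_le_log (by linarith) (by nlinarith)
    gcongr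
  refine (norm_iteratedDeriv_le_of_forall_mem_sphere_norm_le n (by positivity) hcont
    hsphere).trans_eq ?_
  rw [div_pow]
  field_simp
  ring

end LogarithmicDerivativeOfZeta

theorem log_deriv_zeta_bound_general (a : ℝ) (n : ℕ) (δ : ℝ) (hδ : 0 < δ) :
    ∃ K > (0 : ℝ), ∃ T₀ : ℝ, ∀ T ≥ T₀, AdmissibleHeight δ T →
      ∀ σ : ℝ, a ≤ σ →
        ‖iteratedDeriv n (fun s => deriv riemannZeta s / riemannZeta s)
            (↑σ + ↑T * I)‖ ≤ K * Real.log T ^ (n + 2) := by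
  obtain ⟨C, hC, T₀, hbound⟩ := exists_norm_iteratedDeriv_logDeriv_riemannZeta_le a n
  refine ⟨C / δ ^ (n + 1), by positivity, max T₀ (Real.exp δ), fun T hT hadm σ hσ => ?_⟩
  obtain ⟨hT₀, hTδ⟩ := max_le_iff.1 hT
  have hT0 : 0 < T := (Real.exp_pos δ).trans_le hTδ
  have hlog : δ ≤ Real.log T := (Real.le_log_iff_exp_le hT0).2 hTδ
  have hlog0 : 0 < Real.log T := hδ.trans_le hlog
  have hre : (σ + T * I : ℂ).re = σ := by simp
  have him : (σ + T * I : ℂ).im = T := by simp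
  have hdist : ∀ ρ, IsNontrivialZero ρ → δ / Real.log T ≤ ‖σ + T * I - ρ‖ := fun ρ hρ =>
    (hadm ρ hρ).trans (by simpa using abs_im_le_norm (σ + T * I - ρ))
  have hcauchy := hbound (σ + T * I) (δ / Real.log T) (by rwa [hre])
    (by rw [him]; exact hT₀.trans (le_abs_self T)) (by positivity) ((div_le_one hlog0).2 hlog) hdist
  rw [him, abs_of_pos hT0] at hcauchy
  refine hcauchy.trans_eq ?_
  rw [div_pow]
  field_simp
  ring

/-- after Gonek: if `T` is admissible then, uniformly for
`-1 ≤ σ ≤ 2`, the `n`-th derivative of `ζ'/ζ` satisfies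
`(ζ'/ζ)^{(n)}(σ + iT) ≪ log^{n+2} T`, with implied constant depending only
on `n` and `δ`. -/
theorem log_deriv_zeta_bound (n : ℕ) (δ : ℝ) (hδ : 0 < δ) :
    ∃ K > (0 : ℝ), ∃ T₀ : ℝ, ∀ T ≥ T₀, AdmissibleHeight δ T →
      ∀ σ : ℝ, -1 ≤ σ → σ ≤ 2 →
        ‖iteratedDeriv n (fun s => deriv riemannZeta s / riemannZeta s)
            (↑σ + ↑T * I)‖ ≤ K * Real.log T ^ (n + 2) := by
  obtain ⟨K, hK, T₀, hbound⟩ := log_deriv_zeta_bound_general (-1) n δ hδ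
  exact ⟨K, hK, T₀, fun T hT hadm σ hσ _ => hbound T hT hadm σ hσ⟩
end

section
/- Fix an integer n ≥ 1 and set c = 1 + 1/log(2πY). For 2 ≤ V ≤ Y, as Y → ∞, (−1)^{n+1} ∑_{mr ≤ Y} Λ(r) log^n r = (1/2π) ∫_{−V}^{V} (ζ'/ζ)^{(n)}(c + it) · ζ(c + it) · Y^{c+it}/(c + it) dt + R(Y, V), where R(Y, V) ≪ (Y/V) log^{n+2} Y and the sum runs over all ordered pairs (m, r) of positive integers with mr ≤ Y. -/
open Complex Finset

/-- `∑_{mr ≤ Y} Λ(r) log^n r`, summed over all ordered pairs `(m, r)` of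
positive integers with `mr ≤ Y`. -/
noncomputable def vonMangoldtPairSum (n : ℕ) (Y : ℝ) : ℝ :=
  ∑ p ∈ (Finset.Icc 1 ⌊Y⌋₊ ×ˢ Finset.Icc 1 ⌊Y⌋₊).filter
      (fun p : ℕ × ℕ => ((p.1 : ℝ) * (p.2 : ℝ) ≤ Y)),
    ArithmeticFunction.vonMangoldt p.2 * Real.log p.2 ^ n

/-- The vertical line integral
`(1/2πi) ∫_{c-iV}^{c+iV} (ζ'/ζ)^{(n)}(s) ζ(s) Y^s / s ds`, written as a real
integral in `t`. -/
noncomputable def perronIntegral (n : ℕ) (c V Y : ℝ) : ℂ :=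
  ((1 / (2 * Real.pi) : ℝ) : ℂ) *
    ∫ t in -V..V,
      iteratedDeriv n (fun s => deriv riemannZeta s / riemannZeta s) (↑c + ↑t * I) *
        riemannZeta (↑c + ↑t * I) * (Y : ℂ) ^ (↑c + ↑t * I) / (↑c + ↑t * I)

/-!
For `Re s > 1`, `(-1)^(n+1) (ζ'/ζ)^{(n)} ζ` is the Dirichlet series of `a = 1 * (Λ log^n)`, and
`0 ≤ a k ≤ log^(n+1) k` because `1 * Λ = log`. Integrating it term by term against `Y^s / s`
leaves the error `∑ a k E(log (Y / k))`, where `E` is the difference between the indicator function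
of `[0, ∞)` and the truncated Perron kernel. Cauchy's theorem on rectangles gives
`|E(L)| ≤ e^{cL} / (|L| V)` for `L ≠ 0`.

* For `k < ⌊Y⌋`, `1 / log (Y / k) ≤ Y / (Y - k)` turns the error into a harmonic sum.
* For `k = ⌊Y⌋, ⌊Y⌋ + 1` that bound may blow up; integrating `|s|⁻¹ ≤ (1 + t²)^{-1/2}` shows that
  `E` is at most a constant plus a multiple of `arsinh V ≪ log Y`.
* For larger `k` write `c = 1 + 2δ`: since `log^m k ≪ k^δ`, the error is at most a multiple of
  `∑ j^{-1-δ} ≪ 1 / δ ≪ log Y`.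
-/

section RectangleCauchy

/-- The counterclockwise integral of `f` over the boundary of the rectangle `[-b, b] × [-V, V]`. -/
noncomputable def rectBoundaryIntegral (f : ℂ → ℂ) (b V : ℝ) : ℂ :=
  (∫ x in -b..b, f (x + (-V : ℝ) * I)) - (∫ x in -b..b, f (x + V * I)) +
    I * (∫ y in -V..V, f (b + y * I)) - I * ∫ y in -V..V, f ((-b : ℝ) + y * I)

lemma rectBoundaryIntegral_eq_zero {f : ℂ → ℂ} (hf : Differentiable ℂ f) (b V : ℝ) :
    rectBoundaryIntegral f b V = 0 := by
  simpa [rectBoundaryIntegral] using integral_boundary_rect_eq_zero_of_differentiableOn f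
    ((-b : ℝ) + (-V : ℝ) * I) (b + V * I) hf.differentiableOn

lemma ofReal_add_ofReal_mul_I_ne_zero_of_left {x : ℝ} (hx : x ≠ 0) (y : ℝ) :
    (x : ℂ) + y * I ≠ 0 :=
  fun h => hx (by simpa using congrArg re h)

lemma ofReal_add_ofReal_mul_I_ne_zero_of_right (x : ℝ) {y : ℝ} (hy : y ≠ 0) :
    (x : ℂ) + y * I ≠ 0 :=
  fun h => hy (by simpa using congrArg im h)

lemma integral_inv_vertical {c : ℝ} (hc : c ≠ 0) (V : ℝ) :
    ∫ t in -V..V, ((c : ℂ) + t * I)⁻¹ = (2 * Real.arctan (V / c) : ℝ) := by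
  have hcont : Continuous fun t : ℝ => ((c : ℂ) + t * I)⁻¹ :=
    Continuous.inv₀ (by fun_prop) (ofReal_add_ofReal_mul_I_ne_zero_of_left hc)
  have hcont_neg : Continuous fun t : ℝ => ((c : ℂ) + (-t : ℝ) * I)⁻¹ := hcont.comp continuous_neg
  have hreflect : ∫ t in -V..V, ((c : ℂ) + (-t : ℝ) * I)⁻¹ = ∫ t in -V..V, ((c : ℂ) + t * I)⁻¹ := by
    simpa using intervalIntegral.integral_comp_neg (a := -V) (b := V)
      fun t : ℝ => ((c : ℂ) + t * I)⁻¹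
  have hadd (t : ℝ) : ((c : ℂ) + t * I)⁻¹ + ((c : ℂ) + (-t : ℝ) * I)⁻¹ =
      (2 * (c / (c ^ 2 + t ^ 2)) : ℝ) := by
    have h₁ := ofReal_add_ofReal_mul_I_ne_zero_of_left hc t
    have h₂ := ofReal_add_ofReal_mul_I_ne_zero_of_left hc (-t)
    have hprod : ((c : ℂ) + t * I) * (c + (-t : ℝ) * I) = c ^ 2 + t ^ 2 := by
      push_cast
      linear_combination (-(t : ℂ) ^ 2) * I_sq
    rw [inv_add_inv h₁ h₂, hprod]
    push_cast
    ring
  have hdouble : (∫ t in -V..V, ((c : ℂ) + t * I)⁻¹) + ∫ t in -V..V, ((c : ℂ) + t * I)⁻¹ =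
      (2 * (2 * Real.arctan (V / c)) : ℝ) := by
    nth_rewrite 2 [← hreflect]
    rw [← intervalIntegral.integral_add (hcont.intervalIntegrable _ _)
      (hcont_neg.intervalIntegrable _ _)]
    simp only [hadd, intervalIntegral.integral_ofReal, intervalIntegral.integral_const_mul,
      integral_div_sq_add_sq, neg_div, Real.arctan_neg]
    push_cast
    ring
  push_cast at hdouble ⊢
  linear_combination hdouble / 2

lemma integral_inv_horizontal {V : ℝ} (hV : V ≠ 0) (b : ℝ) :
    ∫ x in -b..b, ((x : ℂ) + V * I)⁻¹ = -I * (2 * Real.arctan (b / V) : ℝ) := by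
  have hrotate (x : ℝ) : ((x : ℂ) + V * I)⁻¹ = -I * ((V : ℂ) + (-x : ℝ) * I)⁻¹ := by
    rw [← inv_I, ← mul_inv]
    congr 1
    push_cast
    linear_combination (x : ℂ) * I_sq
  simp only [hrotate, intervalIntegral.integral_const_mul]
  rw [intervalIntegral.integral_comp_neg fun x : ℝ => ((V : ℂ) + x * I)⁻¹, neg_neg,
    integral_inv_vertical hV]

lemma rectBoundaryIntegral_inv {b V : ℝ} (hb : 0 < b) (hV : 0 < V) :
    rectBoundaryIntegral (fun z => z⁻¹) b V = 2 * Real.pi * I := by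
  have harctan : Real.arctan (b / V) = Real.pi / 2 - Real.arctan (V / b) := by
    rw [← Real.arctan_inv_of_pos (div_pos hV hb), inv_div]
  simp only [rectBoundaryIntegral, integral_inv_horizontal hV.ne',
    integral_inv_horizontal (neg_ne_zero.2 hV.ne'), integral_inv_vertical hb.ne',
    integral_inv_vertical (neg_ne_zero.2 hb.ne'), div_neg, Real.arctan_neg, harctan]
  push_cast
  ring

lemma integral_div_self_eq_integral_dslope_add {f : ℂ → ℂ} (hf : Differentiable ℂ f) {γ : ℝ → ℂ}
    (hγ : Continuous γ) (hγ₀ : ∀ t, γ t ≠ 0) (a b : ℝ) :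
    ∫ t in a..b, f (γ t) / γ t =
      (∫ t in a..b, dslope f 0 (γ t)) + f 0 * ∫ t in a..b, (γ t)⁻¹ := by
  have hdslope (t : ℝ) : dslope f 0 (γ t) = f (γ t) / γ t - f 0 * (γ t)⁻¹ := by
    rw [dslope_of_ne _ (hγ₀ t), slope_def_field, sub_zero, sub_div, ← div_eq_mul_inv]
  have hquot : Continuous fun t => f (γ t) / γ t := (hf.continuous.comp hγ).div hγ hγ₀
  have hinv : Continuous fun t => f 0 * (γ t)⁻¹ := continuous_const.mul (hγ.inv₀ hγ₀)
  simp only [hdslope]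
  rw [intervalIntegral.integral_sub (hquot.intervalIntegrable _ _) (hinv.intervalIntegrable _ _),
    intervalIntegral.integral_const_mul, sub_add_cancel]

lemma rectBoundaryIntegral_div_self {f : ℂ → ℂ} (hf : Differentiable ℂ f) {b V : ℝ} (hb : 0 < b)
    (hV : 0 < V) : rectBoundaryIntegral (fun z => f z / z) b V = 2 * Real.pi * I * f 0 := by
  have hdslope : Differentiable ℂ (dslope f 0) := by
    rw [← differentiableOn_univ, differentiableOn_dslope Filter.univ_mem]
    exact hf.differentiableOn
  have hsplit : rectBoundaryIntegral (fun z => f z / z) b V =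
      rectBoundaryIntegral (dslope f 0) b V + f 0 * rectBoundaryIntegral (fun z => z⁻¹) b V := by
    have hhoriz (y : ℝ) (hy : y ≠ 0) := integral_div_self_eq_integral_dslope_add hf
      (γ := fun x : ℝ => x + y * I) (by fun_prop)
      (fun x => ofReal_add_ofReal_mul_I_ne_zero_of_right x hy) (-b) b
    have hvert (x : ℝ) (hx : x ≠ 0) := integral_div_self_eq_integral_dslope_add hf
      (γ := fun y : ℝ => x + y * I) (by fun_prop)
      (ofReal_add_ofReal_mul_I_ne_zero_of_left hx) (-V) V
    rw [rectBoundaryIntegral, hhoriz V hV.ne', hhoriz (-V) (neg_ne_zero.2 hV.ne'),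
      hvert b hb.ne', hvert (-b) (neg_ne_zero.2 hb.ne')]
    simp only [rectBoundaryIntegral]
    ring
  rw [hsplit, rectBoundaryIntegral_eq_zero hdslope, rectBoundaryIntegral_inv hb hV]
  ring

end RectangleCauchy

section PerronKernel

/-- The integrand `e^{Ls} / s` of the Perron kernel, i.e. `y^s / s` with `y = e^L`. -/
noncomputable def perronIntegrand (L : ℝ) (s : ℂ) : ℂ := cexp (s * L) / s

/-- The truncated Perron kernel `(1/2πi) ∫_{c-iV}^{c+iV} y^s / s ds`, as a function of `L = log y`.
For `c > 0` it approximates the indicator function of `L > 0`. -/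
noncomputable def perronKernel (c V L : ℝ) : ℂ :=
  ((1 / (2 * Real.pi) : ℝ) : ℂ) * ∫ t in -V..V, perronIntegrand L (c + t * I)

lemma perronIntegrand_neg (L : ℝ) (s : ℂ) : perronIntegrand L (-s) = -perronIntegrand (-L) s := by
  rw [perronIntegrand, perronIntegrand, div_neg, ofReal_neg, neg_mul_comm]

lemma norm_perronIntegrand (L x t : ℝ) :
    ‖perronIntegrand L (x + t * I)‖ = Real.exp (x * L) / ‖(x : ℂ) + t * I‖ := by
  simp [perronIntegrand, Complex.norm_exp]

lemma norm_perronIntegrand_le_div_abs_im (L x : ℝ) {t : ℝ} (ht : t ≠ 0) :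
    ‖perronIntegrand L (x + t * I)‖ ≤ Real.exp (x * L) / |t| := by
  have him : |t| ≤ ‖(x : ℂ) + t * I‖ := by simpa using abs_im_le_norm ((x : ℂ) + t * I)
  rw [norm_perronIntegrand]
  gcongr

lemma norm_perronIntegrand_le_div (L : ℝ) {x : ℝ} (hx : 0 < x) (t : ℝ) :
    ‖perronIntegrand L (x + t * I)‖ ≤ Real.exp (x * L) / x := by
  have hre : x ≤ ‖(x : ℂ) + t * I‖ := by simpa using re_le_norm ((x : ℂ) + t * I)
  rw [norm_perronIntegrand]
  gcongr

lemma continuous_perronIntegrand_vertical (L : ℝ) {c : ℝ} (hc : c ≠ 0) :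
    Continuous fun t : ℝ => perronIntegrand L (c + t * I) :=
  Continuous.div (by fun_prop) (by fun_prop) (ofReal_add_ofReal_mul_I_ne_zero_of_left hc)

lemma integral_exp_mul_const (a b : ℝ) {L : ℝ} (hL : L ≠ 0) :
    ∫ x in a..b, Real.exp (x * L) = (Real.exp (b * L) - Real.exp (a * L)) / L := by
  rw [intervalIntegral.integral_comp_mul_right Real.exp hL, integral_exp, smul_eq_mul,
    inv_mul_eq_div]

lemma norm_integral_perronIntegrand_horizontal_le {L a b t : ℝ} (hL : L < 0) (hab : a ≤ b)
    (ht : t ≠ 0) :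
    ‖∫ x in a..b, perronIntegrand L (x + t * I)‖ ≤ Real.exp (a * L) / (-L * |t|) := by
  have ht' : 0 < |t| := abs_pos.2 ht
  calc ‖∫ x in a..b, perronIntegrand L (x + t * I)‖
      ≤ ∫ x in a..b, Real.exp (x * L) / |t| :=
        intervalIntegral.norm_integral_le_of_norm_le hab
          (.of_forall fun x _ => norm_perronIntegrand_le_div_abs_im L x ht)
          (Continuous.intervalIntegrable (by fun_prop) _ _)
    _ = (Real.exp (a * L) - Real.exp (b * L)) / (-L * |t|) := by
        rw [intervalIntegral.integral_div, integral_exp_mul_const a b hL.ne, div_div, neg_mul,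
          div_neg, ← neg_div, neg_sub]
    _ ≤ Real.exp (a * L) / (-L * |t|) := by
        have : 0 < -L * |t| := mul_pos (neg_pos.2 hL) ht'
        gcongr
        exact sub_le_self _ (Real.exp_pos _).le

lemma tendsto_integral_perronIntegrand_vertical_atTop {L V : ℝ} (hL : L < 0) :
    Filter.Tendsto (fun A : ℝ => ∫ t in -V..V, perronIntegrand L (A + t * I))
      Filter.atTop (nhds 0) := by
  have hexp : Filter.Tendsto (fun A : ℝ => Real.exp (A * L) * |V - -V|)
      Filter.atTop (nhds 0) := by
    simpa using (Real.tendsto_exp_atBot.comp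
      (Filter.tendsto_id.atTop_mul_const_of_neg hL)).mul_const |V - -V|
  refine squeeze_zero_norm' ?_ hexp
  filter_upwards [Filter.eventually_ge_atTop 1] with A hA
  refine intervalIntegral.norm_integral_le_of_norm_le_const fun t _ => ?_
  exact (norm_perronIntegrand_le_div L (by positivity) t).trans
    (div_le_self (Real.exp_pos _).le hA)

lemma integral_perronIntegrand_vertical_eq {c A : ℝ} (hc : 0 < c) (hcA : c ≤ A) (L V : ℝ) :
    I * ∫ t in -V..V, perronIntegrand L (c + t * I) =
      (∫ x in c..A, perronIntegrand L (x + (-V : ℝ) * I)) -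
        (∫ x in c..A, perronIntegrand L (x + V * I)) +
        I * ∫ t in -V..V, perronIntegrand L (A + t * I) := by
  have hdiff : DifferentiableOn ℂ (perronIntegrand L) {s | 0 < s.re} := by
    intro s hs
    have hs₀ : s ≠ 0 := by
      rintro rfl
      simp at hs
    unfold perronIntegrand
    fun_prop (disch := assumption)
  have hrect := integral_boundary_rect_eq_zero_of_differentiableOn (perronIntegrand L)
    (c + (-V : ℝ) * I) (A + V * I) <| hdiff.mono fun s hs => by
      have hre : s.re ∈ Set.Icc c A := by simpa [Set.uIcc_of_le hcA] using hs.1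
      exact hc.trans_le hre.1
  simp only [add_re, ofReal_re, mul_re, I_re, mul_zero, ofReal_im, I_im, mul_one, sub_self,
    add_zero, add_im, mul_im, zero_add, smul_eq_mul] at hrect
  linear_combination -hrect

lemma two_pi_mul_perronKernel (c V L : ℝ) :
    2 * Real.pi * perronKernel c V L = ∫ t in -V..V, perronIntegrand L (c + t * I) := by
  have hπ : (2 * Real.pi : ℂ) ≠ 0 := by simp [Real.pi_ne_zero]
  rw [perronKernel, ofReal_div, ofReal_one, ofReal_mul, ofReal_ofNat, one_div,
    mul_inv_cancel_left₀ hπ]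

lemma norm_one_div_two_pi_mul (z : ℂ) :
    ‖((1 / (2 * Real.pi) : ℝ) : ℂ) * z‖ = ‖z‖ / (2 * Real.pi) := by
  rw [norm_mul, norm_real, Real.norm_of_nonneg (by positivity), one_div_mul_eq_div]

lemma norm_perronKernel_le_of_neg {c V L : ℝ} (hc : 0 < c) (hV : 0 < V) (hL : L < 0) :
    ‖perronKernel c V L‖ ≤ Real.exp (c * L) / (Real.pi * (-L * V)) := by
  have hbound : ‖∫ t in -V..V, perronIntegrand L (c + t * I)‖ ≤
      Real.exp (c * L) / (-L * V) + Real.exp (c * L) / (-L * V) := by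
    have hlim := (tendsto_integral_perronIntegrand_vertical_atTop (V := V) hL).norm.const_add
      (Real.exp (c * L) / (-L * V) + Real.exp (c * L) / (-L * V))
    rw [norm_zero, add_zero] at hlim
    refine ge_of_tendsto hlim ?_
    filter_upwards [Filter.eventually_ge_atTop c] with A hcA
    have hbot := norm_integral_perronIntegrand_horizontal_le hL hcA (neg_ne_zero.2 hV.ne')
    have htop := norm_integral_perronIntegrand_horizontal_le hL hcA hV.ne'
    rw [abs_neg, abs_of_pos hV] at hbot
    rw [abs_of_pos hV] at htop
    calc ‖∫ t in -V..V, perronIntegrand L (c + t * I)‖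
        = ‖I * ∫ t in -V..V, perronIntegrand L (c + t * I)‖ := by rw [norm_mul, norm_I, one_mul]
      _ ≤ _ := by
        rw [integral_perronIntegrand_vertical_eq hc hcA]
        refine norm_add_le_of_le (norm_sub_le_of_le hbot htop) ?_
        rw [norm_mul, norm_I, one_mul]
  rw [perronKernel, norm_one_div_two_pi_mul]
  calc _ ≤ (Real.exp (c * L) / (-L * V) + Real.exp (c * L) / (-L * V)) / (2 * Real.pi) := by gcongr
    _ = Real.exp (c * L) / (Real.pi * (-L * V)) := by
      field_simp
      ring

lemma integral_perronIntegrand_vertical_neg (c V L : ℝ) :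
    ∫ t in -V..V, perronIntegrand L ((-c : ℝ) + t * I) =
      -∫ t in -V..V, perronIntegrand (-L) (c + t * I) := by
  have hreflect := intervalIntegral.integral_comp_neg (a := -V) (b := V)
    fun t : ℝ => perronIntegrand L ((-c : ℝ) + t * I)
  rw [neg_neg] at hreflect
  rw [← hreflect, ← intervalIntegral.integral_neg]
  congr 1 with t
  rw [← perronIntegrand_neg]
  push_cast
  ring_nf

-- On `[-c, c] × [-V, V]` the left side is the reflection of the right side under `s ↦ -s`, which
-- turns `L` into `-L`; hence the residue at `0` is shared between the kernels at `L` and `-L`.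
lemma perronKernel_add_perronKernel_neg_sub_one {c V : ℝ} (hc : 0 < c) (hV : 0 < V) (L : ℝ) :
    2 * Real.pi * I * (perronKernel c V L + perronKernel c V (-L) - 1) =
      (∫ x in -c..c, perronIntegrand L (x + V * I)) -
        ∫ x in -c..c, perronIntegrand L (x + (-V : ℝ) * I) := by
  have hcauchy := rectBoundaryIntegral_div_self (f := fun s => cexp (s * L)) (by fun_prop) hc hV
  change rectBoundaryIntegral (perronIntegrand L) c V = _ at hcauchy
  rw [rectBoundaryIntegral, integral_perronIntegrand_vertical_neg, zero_mul, exp_zero] at hcauchy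
  linear_combination hcauchy + I * two_pi_mul_perronKernel c V L +
    I * two_pi_mul_perronKernel c V (-L)

lemma norm_perronKernel_add_perronKernel_neg_sub_one_le {c V L : ℝ} (hc : 0 < c) (hV : 0 < V)
    (hL : L < 0) :
    ‖perronKernel c V L + perronKernel c V (-L) - 1‖ ≤
      Real.exp (-c * L) / (Real.pi * (-L * V)) := by
  have hbot := norm_integral_perronIntegrand_horizontal_le hL (neg_le_self hc.le)
    (neg_ne_zero.2 hV.ne')
  have htop := norm_integral_perronIntegrand_horizontal_le hL (neg_le_self hc.le) hV.ne'
  rw [abs_neg, abs_of_pos hV] at hbot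
  rw [abs_of_pos hV] at htop
  have hnorm := congrArg norm (perronKernel_add_perronKernel_neg_sub_one hc hV L)
  rw [norm_mul, norm_mul, norm_mul, norm_I, norm_real, Real.norm_of_nonneg Real.pi_pos.le,
    norm_ofNat, mul_one] at hnorm
  have hbound := hnorm.trans_le (norm_sub_le_of_le htop hbot)
  rw [← div_div, div_right_comm, le_div_iff₀ Real.pi_pos]
  linarith

/-- The error made by `perronKernel` in approximating the indicator function of `0 ≤ L`. The value
`1` at `L = 0` makes a term with `k = Y` count fully in a partial sum over `k ≤ Y`. -/
noncomputable def perronKernelError (c V L : ℝ) : ℂ :=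
  (if 0 ≤ L then 1 else 0) - perronKernel c V L

lemma norm_perronKernelError_le {c V L : ℝ} (hc : 0 < c) (hV : 0 < V) (hL : L ≠ 0) :
    ‖perronKernelError c V L‖ ≤ Real.exp (c * L) / (|L| * V) := by
  have hπ := Real.pi_gt_three
  have hπ₁ : 1 ≤ Real.pi := by linarith
  rw [perronKernelError]
  rcases hL.lt_or_gt with hneg | hpos
  · rw [if_neg hneg.not_ge, zero_sub, norm_neg, abs_of_neg hneg]
    have : 0 < -L * V := mul_pos (neg_pos.2 hneg) hV
    exact (norm_perronKernel_le_of_neg hc hV hneg).trans <|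
      div_le_div_of_nonneg_left (Real.exp_pos _).le this (le_mul_of_one_le_left this.le hπ₁)
  · rw [if_pos hpos.le, abs_of_pos hpos]
    have hsum := norm_perronKernel_add_perronKernel_neg_sub_one_le hc hV (neg_lt_zero.2 hpos)
    have hneg := norm_perronKernel_le_of_neg hc hV (neg_lt_zero.2 hpos)
    rw [neg_neg, neg_mul_neg] at hsum
    rw [neg_neg] at hneg
    have hexp : Real.exp (c * -L) ≤ Real.exp (c * L) := by
      gcongr
      linarith
    calc ‖1 - perronKernel c V L‖
        = ‖perronKernel c V (-L) - (perronKernel c V (-L) + perronKernel c V L - 1)‖ := by ring_nf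
      _ ≤ Real.exp (c * -L) / (Real.pi * (L * V)) + Real.exp (c * L) / (Real.pi * (L * V)) :=
        norm_sub_le_of_le hneg hsum
      _ ≤ Real.exp (c * L) / (2 * (L * V)) + Real.exp (c * L) / (2 * (L * V)) := by
        gcongr <;> linarith
      _ = Real.exp (c * L) / (L * V) := by ring

lemma norm_perronKernel_le_arsinh {c V : ℝ} (hc : 1 ≤ c) (hV : 0 ≤ V) (L : ℝ) :
    ‖perronKernel c V L‖ ≤ Real.exp (c * L) * Real.arsinh V := by
  have hcont : Continuous fun t : ℝ => (√(1 + t ^ 2))⁻¹ :=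
    Continuous.inv₀ (by fun_prop) fun t => by positivity
  have hintegral : ∫ t in -V..V, (√(1 + t ^ 2))⁻¹ = 2 * Real.arsinh V := by
    rw [intervalIntegral.integral_eq_sub_of_hasDerivAt (fun t _ => Real.hasDerivAt_arsinh t)
      (hcont.intervalIntegrable _ _), Real.arsinh_neg]
    ring
  have hpointwise (t : ℝ) :
      ‖perronIntegrand L (c + t * I)‖ ≤ Real.exp (c * L) * (√(1 + t ^ 2))⁻¹ := by
    rw [norm_perronIntegrand, norm_add_mul_I, ← div_eq_mul_inv]
    gcongr
    exact one_le_pow₀ hc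
  have hbound : ‖∫ t in -V..V, perronIntegrand L (c + t * I)‖ ≤
      Real.exp (c * L) * (2 * Real.arsinh V) := by
    rw [← hintegral, ← intervalIntegral.integral_const_mul]
    exact intervalIntegral.norm_integral_le_of_norm_le (by linarith)
      (.of_forall fun t _ => hpointwise t) ((hcont.const_mul _).intervalIntegrable _ _)
  rw [perronKernel, norm_one_div_two_pi_mul, div_le_iff₀ (by positivity)]
  have harsinh : 0 ≤ Real.arsinh V := Real.arsinh_nonneg_iff.2 hV
  calc ‖∫ t in -V..V, perronIntegrand L (c + t * I)‖
      ≤ Real.exp (c * L) * Real.arsinh V * 2 := hbound.trans_eq (by ring)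
    _ ≤ Real.exp (c * L) * Real.arsinh V * (2 * Real.pi) := by
      gcongr
      linarith [Real.pi_gt_three]

end PerronKernel

section DirichletSeries

/-- The truncated inverse Mellin transform `(1/2πi) ∫_{c-iV}^{c+iV} F(s) Y^s / s ds` of Perron's
formula, written as a real integral in `t`. -/
noncomputable def perronTransform (F : ℂ → ℂ) (c V Y : ℝ) : ℂ :=
  ((1 / (2 * Real.pi) : ℝ) : ℂ) *
    ∫ t in -V..V, F (c + t * I) * (Y : ℂ) ^ (c + t * I) / (c + t * I)

lemma term_mul_cpow_div {Y : ℝ} (hY : 0 < Y) {a : ℕ → ℂ} (ha₀ : a 0 = 0) (s : ℂ) (k : ℕ) :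
    LSeries.term a s k * (Y : ℂ) ^ s / s = a k * perronIntegrand (Real.log (Y / k)) s := by
  rcases eq_or_ne k 0 with rfl | hk
  · simp [ha₀]
  have hY' : (Y : ℂ) ≠ 0 := ofReal_ne_zero.2 hY.ne'
  have hk' : (k : ℂ) ≠ 0 := Nat.cast_ne_zero.2 hk
  have hratio : (Y : ℂ) ^ s / (k : ℂ) ^ s = cexp (s * Real.log (Y / k)) := by
    rw [cpow_def_of_ne_zero hY', cpow_def_of_ne_zero hk', ← exp_sub,
      Real.log_div hY.ne' (Nat.cast_ne_zero.2 hk), ofReal_sub, ofReal_log hY.le, natCast_log]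
    ring_nf
  rw [LSeries.term_of_ne_zero hk, perronIntegrand, ← hratio]
  ring

lemma hasSum_mul_perronKernel {a : ℕ → ℂ} (ha₀ : a 0 = 0) {c Y : ℝ} (hc : 0 < c) (hY : 0 < Y)
    (ha : LSeriesSummable a c) (V : ℝ) :
    HasSum (fun k : ℕ => a k * perronKernel c V (Real.log (Y / k)))
      (perronTransform (LSeries a) c V Y) := by
  have hre (t : ℝ) : ((c : ℂ) + t * I).re = c := by simp
  have hbound (k : ℕ) (t : ℝ) : ‖a k * perronIntegrand (Real.log (Y / k)) (c + t * I)‖ ≤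
      ‖LSeries.term a c k‖ * (Y ^ c / c) := by
    have hnorm : c ≤ ‖(c : ℂ) + t * I‖ := by simpa using re_le_norm ((c : ℂ) + t * I)
    rw [← term_mul_cpow_div hY ha₀, norm_div, norm_mul, norm_cpow_eq_rpow_re_of_pos hY, hre,
      mul_div_assoc]
    gcongr
    exact LSeries.norm_term_le_of_re_le_re a (by simp) k
  have hsum (t : ℝ) : HasSum (fun k => a k * perronIntegrand (Real.log (Y / k)) (c + t * I))
      (LSeries a (c + t * I) * (Y : ℂ) ^ (c + t * I) / (c + t * I)) := by
    have hsummable : LSeriesSummable a (c + t * I) := ha.of_re_le_re (by simp)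
    simpa only [term_mul_cpow_div hY ha₀] using
      (hsummable.LSeriesHasSum.mul_right ((Y : ℂ) ^ ((c : ℂ) + t * I))).div_const (c + t * I)
  have hintegral := intervalIntegral.hasSum_integral_of_dominated_convergence
    (a := -V) (b := V) (fun k (_ : ℝ) => ‖LSeries.term a c k‖ * (Y ^ c / c))
    (fun k => ((continuous_perronIntegrand_vertical (Real.log (Y / k)) hc.ne').const_mul
      (a k)).aestronglyMeasurable)
    (fun k => .of_forall fun t _ => hbound k t)
    (.of_forall fun _ _ => ha.norm.mul_right _)
    (intervalIntegrable_const (μ := MeasureTheory.volume))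
    (.of_forall fun t _ => hsum t)
  have hscaled := hintegral.mul_left ((1 / (2 * Real.pi) : ℝ) : ℂ)
  simp only [intervalIntegral.integral_const_mul] at hscaled
  simpa only [perronKernel, perronTransform, mul_left_comm] using hscaled

lemma hasSum_mul_perronKernelError {a : ℕ → ℂ} (ha₀ : a 0 = 0) {c Y : ℝ} (hc : 0 < c)
    (hY : 0 < Y) (ha : LSeriesSummable a c) (V : ℝ) :
    HasSum (fun k : ℕ => a k * perronKernelError c V (Real.log (Y / k)))
      (∑ k ∈ Ioc 0 ⌊Y⌋₊, a k - perronTransform (LSeries a) c V Y) := by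
  have hindicator : HasSum (fun k : ℕ => a k * if 0 ≤ Real.log (Y / k) then 1 else 0)
      (∑ k ∈ Ioc 0 ⌊Y⌋₊, a k) := by
    have hsupport (k : ℕ) (hk : k ∉ Ioc 0 ⌊Y⌋₊) :
        (a k * if 0 ≤ Real.log (Y / k) then 1 else 0) = 0 := by
      rcases k.eq_zero_or_pos with rfl | hk₀
      · simp [ha₀]
      have hlt : Y < k := (Nat.floor_lt hY.le).1 (by simpa [hk₀] using hk)
      have hlog : Real.log (Y / k) < 0 :=
        Real.log_neg (by positivity) ((div_lt_one (by positivity)).2 hlt)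
      rw [if_neg hlog.not_ge, mul_zero]
    have hvalue (k : ℕ) (hk : k ∈ Ioc 0 ⌊Y⌋₊) :
        (a k * if 0 ≤ Real.log (Y / k) then 1 else 0) = a k := by
      obtain ⟨hk₀, hkY⟩ := mem_Ioc.1 hk
      have hle : (k : ℝ) ≤ Y := (Nat.le_floor_iff hY.le).1 hkY
      have hlog : 0 ≤ Real.log (Y / k) := Real.log_nonneg ((one_le_div (by positivity)).2 hle)
      rw [if_pos hlog, mul_one]
    rw [← sum_congr rfl hvalue]
    exact hasSum_sum_of_ne_finset_zero hsupport
  simpa only [perronKernelError, mul_sub] using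
    hindicator.sub (hasSum_mul_perronKernel ha₀ hc hY ha V)

end DirichletSeries

section ErrorTerm

lemma log_pow_le_factorial_mul_rpow (m : ℕ) {δ x : ℝ} (hδ : 0 < δ) (hx : 1 ≤ x) :
    Real.log x ^ m ≤ m.factorial / δ ^ m * x ^ δ := by
  have hlog : 0 ≤ Real.log x := Real.log_nonneg hx
  have hexp := Real.pow_div_factorial_le_exp (δ * Real.log x) (by positivity) m
  rw [mul_comm δ, ← Real.rpow_def_of_pos (by positivity), mul_pow,
    div_le_iff₀ (by positivity)] at hexp
  rw [div_mul_eq_mul_div, le_div_iff₀ (by positivity)]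
  linarith

lemma summable_one_div_nat_add_one_rpow {δ : ℝ} (hδ : 0 < δ) :
    Summable fun j : ℕ => 1 / ((j : ℝ) + 1) ^ (1 + δ) := by
  simpa using (summable_nat_add_iff 1).2
    (Real.summable_one_div_nat_rpow.2 (lt_add_of_pos_right 1 hδ))

lemma tsum_one_div_nat_add_one_rpow_le {δ : ℝ} (hδ : 0 < δ) :
    ∑' j : ℕ, 1 / ((j : ℝ) + 1) ^ (1 + δ) ≤ 1 + 1 / δ := by
  have hzeta := ZetaAsymptotics.zeta_limit_aux1 (s := 1 + δ) (lt_add_of_pos_right 1 hδ)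
  have hterm : 0 ≤ ZetaAsymptotics.termTSum (1 + δ) :=
    tsum_nonneg fun _ => ZetaAsymptotics.term_nonneg _ _
  have hmul : 0 ≤ (1 + δ) * ZetaAsymptotics.termTSum (1 + δ) := by positivity
  rw [add_sub_cancel_left] at hzeta
  linarith

lemma sum_Ico_one_div_le (N : ℕ) : ∑ k ∈ Ico 1 N, 1 / (k : ℝ) ≤ 1 + Real.log N := by
  have hharmonic := harmonic_le_one_add_log N
  rw [harmonic_eq_sum_Icc] at hharmonic
  push_cast at hharmonic
  simp only [one_div]
  exact (sum_le_sum_of_subset_of_nonneg Ico_subset_Icc_self fun _ _ _ => by positivity).trans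
    hharmonic

lemma sum_Ico_one_div_add_one_div_sub_le (N : ℕ) :
    ∑ k ∈ Ico 1 N, (1 / (k : ℝ) + 1 / ((N : ℝ) - k)) ≤ 2 * (1 + Real.log N) := by
  have hreflect : ∑ k ∈ Ico 1 N, 1 / ((N : ℝ) - k) = ∑ k ∈ Ico 1 N, 1 / (k : ℝ) := by
    have hsum := sum_Ico_reflect (fun k : ℕ => 1 / (k : ℝ)) 1 N.le_succ
    rw [Nat.add_sub_cancel_left, Nat.add_sub_cancel] at hsum
    rw [← hsum]
    exact sum_congr rfl fun k hk => by rw [Nat.cast_sub (mem_Ico.1 hk).2.le]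
  rw [sum_add_distrib, hreflect]
  linarith [sum_Ico_one_div_le N]

lemma exp_mul_log_div (c : ℝ) {x y : ℝ} (hx : 0 < x) (hy : 0 < y) :
    Real.exp (c * Real.log (x / y)) = x ^ c / y ^ c := by
  rw [← Real.div_rpow hx.le hy.le, Real.rpow_def_of_pos (by positivity), mul_comm]

lemma norm_perronKernelError_log_div_le_of_lt {c V x y : ℝ} (hc : 1 ≤ c) (hV : 0 < V)
    (hy : 1 ≤ y) (hyx : y < x) :
    ‖perronKernelError c V (Real.log (x / y))‖ ≤ x ^ c / V * (1 / y + 1 / (x - y)) := by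
  have hx : 0 < x := by linarith
  have hsub : 0 < x - y := sub_pos.2 hyx
  have hlog : (x - y) / x ≤ Real.log (x / y) := by
    simpa [sub_div, hx.ne'] using Real.one_sub_inv_le_log_of_pos (x := x / y) (by positivity)
  have hlog₀ : 0 < Real.log (x / y) := lt_of_lt_of_le (by positivity) hlog
  calc ‖perronKernelError c V (Real.log (x / y))‖
      ≤ x ^ c / y ^ c / (Real.log (x / y) * V) := by
        rw [← exp_mul_log_div c hx (by positivity)]
        simpa only [abs_of_pos hlog₀] using
          norm_perronKernelError_le (c := c) (by positivity) hV hlog₀.ne'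
    _ ≤ x ^ c / y / ((x - y) / x * V) := by
        gcongr
        exact Real.self_le_rpow_of_one_le hy hc
    _ = x ^ c / V * (1 / y + 1 / (x - y)) := by
        field_simp
        ring

lemma norm_perronKernelError_log_div_le_of_gt {c V x y : ℝ} (hc : 0 < c) (hV : 0 < V)
    (hx : 0 < x) (hxy : x < y) :
    ‖perronKernelError c V (Real.log (x / y))‖ ≤ x ^ c / V * (y ^ (1 - c) / (y - x)) := by
  have hy : 0 < y := hx.trans hxy
  have hsub : 0 < y - x := sub_pos.2 hxy
  have hlog : (y - x) / y ≤ |Real.log (x / y)| := by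
    rw [← abs_neg, ← Real.log_inv, inv_div]
    refine le_trans ?_ (le_abs_self _)
    simpa [sub_div, hy.ne'] using Real.one_sub_inv_le_log_of_pos (x := y / x) (by positivity)
  have hlog₀ : 0 < |Real.log (x / y)| := lt_of_lt_of_le (by positivity) hlog
  calc ‖perronKernelError c V (Real.log (x / y))‖
      ≤ x ^ c / y ^ c / (|Real.log (x / y)| * V) := by
        rw [← exp_mul_log_div c hx hy]
        exact norm_perronKernelError_le hc hV (abs_pos.1 hlog₀)
    _ ≤ x ^ c / y ^ c / ((y - x) / y * V) := by gcongr
    _ = x ^ c / V * (y ^ (1 - c) / (y - x)) := by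
        rw [Real.rpow_sub hy, Real.rpow_one]
        field_simp

lemma norm_perronKernelError_log_div_le_of_half_le {c V x y : ℝ} (hc : 1 ≤ c) (hc₂ : c ≤ 2)
    (hV : 0 ≤ V) (hx : 0 < x) (hxy : x / 2 ≤ y) :
    ‖perronKernelError c V (Real.log (x / y))‖ ≤ 1 + 4 * Real.arsinh V := by
  have hy : 0 < y := by linarith
  have hpow : Real.exp (c * Real.log (x / y)) ≤ 4 := by
    rw [exp_mul_log_div c hx hy, ← Real.div_rpow hx.le hy.le]
    calc (x / y) ^ c ≤ 2 ^ c := by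
          gcongr
          rw [div_le_iff₀ hy]
          linarith
      _ ≤ 2 ^ (2 : ℝ) := Real.rpow_le_rpow_of_exponent_le one_le_two hc₂
      _ = 4 := by norm_num
  have harsinh : 0 ≤ Real.arsinh V := Real.arsinh_nonneg_iff.2 hV
  refine norm_sub_le_of_le ?_ ((norm_perronKernel_le_arsinh hc hV _).trans (by gcongr))
  split_ifs <;> simp

variable {a : ℕ → ℂ} {m : ℕ}

lemma norm_le_log_pow_of_le (ha : ∀ k, ‖a k‖ ≤ Real.log k ^ m) {k : ℕ} {x : ℝ} (hk : 0 < k)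
    (hkx : k ≤ x) : ‖a k‖ ≤ Real.log x ^ m := by
  refine (ha k).trans ?_
  gcongr

lemma norm_le_factorial_mul_rpow (ha : ∀ k, ‖a k‖ ≤ Real.log k ^ m) {δ : ℝ} (hδ : 0 < δ) {k : ℕ}
    (hk : k ≠ 0) : ‖a k‖ ≤ m.factorial / δ ^ m * (k : ℝ) ^ δ :=
  (ha k).trans <| log_pow_le_factorial_mul_rpow m hδ <|
    Nat.one_le_cast.2 (Nat.one_le_iff_ne_zero.2 hk)

lemma LSeriesSummable_of_norm_le_log_pow (ha : ∀ k, ‖a k‖ ≤ Real.log k ^ m) {s : ℂ}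
    (hs : 1 < s.re) : LSeriesSummable a s := by
  have hδ : 0 < (s.re - 1) / 2 := by linarith
  refine LSeriesSummable_of_le_const_mul_rpow (x := 1 + (s.re - 1) / 2) (by linarith)
    ⟨m.factorial / ((s.re - 1) / 2) ^ m, fun k hk => ?_⟩
  rw [add_sub_cancel_left]
  exact norm_le_factorial_mul_rpow ha hδ hk

lemma sum_norm_mul_perronKernelError_le (ha : ∀ k, ‖a k‖ ≤ Real.log k ^ m) {c V Y : ℝ}
    (hc : 1 ≤ c) (hV : 0 < V) (hY : 1 ≤ Y) :
    ∑ k ∈ Ico 1 ⌊Y⌋₊, ‖a k * perronKernelError c V (Real.log (Y / k))‖ ≤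
      Y ^ c / V * (2 * Real.log Y ^ m * (1 + Real.log Y)) := by
  have hY₀ : 0 < Y := by linarith
  have hlog : 0 ≤ Real.log Y := Real.log_nonneg hY
  have hfloor : (⌊Y⌋₊ : ℝ) ≤ Y := Nat.floor_le hY₀.le
  have hterm (k : ℕ) (hk : k ∈ Ico 1 ⌊Y⌋₊) :
      ‖a k * perronKernelError c V (Real.log (Y / k))‖ ≤
        Y ^ c / V * Real.log Y ^ m * (1 / (k : ℝ) + 1 / ((⌊Y⌋₊ : ℝ) - k)) := by
    obtain ⟨hk₁, hkN⟩ := mem_Ico.1 hk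
    have hkN' : (0 : ℝ) < ⌊Y⌋₊ - k := sub_pos.2 (Nat.cast_lt.2 hkN)
    rw [norm_mul, mul_comm (Y ^ c / V), mul_assoc]
    gcongr
    · exact norm_le_log_pow_of_le ha hk₁ (by linarith)
    · refine (norm_perronKernelError_log_div_le_of_lt hc hV (Nat.one_le_cast.2 hk₁)
        (by linarith)).trans ?_
      gcongr
  have hharmonic : ∑ k ∈ Ico 1 ⌊Y⌋₊, (1 / (k : ℝ) + 1 / ((⌊Y⌋₊ : ℝ) - k)) ≤
      2 * (1 + Real.log Y) := by
    refine (sum_Ico_one_div_add_one_div_sub_le ⌊Y⌋₊).trans ?_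
    gcongr
    exact Nat.cast_pos.2 (Nat.floor_pos.2 hY)
  calc _ ≤ _ := sum_le_sum hterm
    _ ≤ Y ^ c / V * Real.log Y ^ m * (2 * (1 + Real.log Y)) := by
      rw [← mul_sum]
      gcongr
    _ = Y ^ c / V * (2 * Real.log Y ^ m * (1 + Real.log Y)) := by ring

lemma norm_mul_perronKernelError_le_of_near (ha : ∀ k, ‖a k‖ ≤ Real.log k ^ m) {c V Y : ℝ}
    (hc : 1 ≤ c) (hc₂ : c ≤ 2) (hV : 0 ≤ V) (hY : 0 < Y) {k : ℕ} (hYk : Y / 2 ≤ k)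
    (hkY : k ≤ 2 * Y) :
    ‖a k * perronKernelError c V (Real.log (Y / k))‖ ≤
      Real.log (2 * Y) ^ m * (1 + 4 * Real.arsinh V) := by
  have hk : 0 < k := Nat.cast_pos.1 (lt_of_lt_of_le (by positivity) hYk)
  have hak := norm_le_log_pow_of_le ha hk hkY
  rw [norm_mul]
  exact mul_le_mul hak (norm_perronKernelError_log_div_le_of_half_le hc hc₂ hV hY hYk)
    (norm_nonneg _) ((norm_nonneg _).trans hak)

lemma norm_mul_perronKernelError_le_of_tail (ha : ∀ k, ‖a k‖ ≤ Real.log k ^ m) {δ V Y : ℝ}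
    (hδ : 0 < δ) (hV : 0 < V) (hY : 0 < Y) {j k : ℕ} (hk : Y + (j + 1) ≤ k) :
    ‖a k * perronKernelError (1 + 2 * δ) V (Real.log (Y / k))‖ ≤
      Y ^ (1 + 2 * δ) / V * (m.factorial / δ ^ m) * (1 / ((j : ℝ) + 1) ^ (1 + δ)) := by
  have hj : (0 : ℝ) < j + 1 := by positivity
  have hk₀ : (0 : ℝ) < k := by linarith
  have hcoeff := norm_le_factorial_mul_rpow ha hδ (Nat.cast_pos.1 hk₀).ne'
  have herror := norm_perronKernelError_log_div_le_of_gt (c := 1 + 2 * δ) (by positivity) hV hY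
    (show Y < k by linarith)
  have hpow : (k : ℝ) ^ δ * (k : ℝ) ^ (1 - (1 + 2 * δ)) = ((k : ℝ) ^ δ)⁻¹ := by
    rw [← Real.rpow_add hk₀, ← Real.rpow_neg hk₀.le]
    ring_nf
  rw [norm_mul]
  calc _ ≤ m.factorial / δ ^ m * (k : ℝ) ^ δ *
        (Y ^ (1 + 2 * δ) / V * ((k : ℝ) ^ (1 - (1 + 2 * δ)) / (k - Y))) := by gcongr
    _ = Y ^ (1 + 2 * δ) / V * (m.factorial / δ ^ m) * (((k : ℝ) ^ δ)⁻¹ * (1 / (k - Y))) := by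
      rw [← hpow]
      ring
    _ ≤ Y ^ (1 + 2 * δ) / V * (m.factorial / δ ^ m) *
        ((((j : ℝ) + 1) ^ δ)⁻¹ * (1 / ((j : ℝ) + 1))) := by
      have hkY : 0 < k - Y := by linarith
      gcongr <;> linarith
    _ = Y ^ (1 + 2 * δ) / V * (m.factorial / δ ^ m) * (1 / ((j : ℝ) + 1) ^ (1 + δ)) := by
      rw [Real.rpow_add hj, Real.rpow_one]
      field_simp

lemma norm_sum_sub_perronTransform_le (ha₀ : a 0 = 0) (ha : ∀ k, ‖a k‖ ≤ Real.log k ^ m)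
    {δ V Y : ℝ} (hδ : 0 < δ) (hδ₂ : δ ≤ 1 / 2) (hV : 0 < V) (hY : 2 ≤ Y) :
    ‖∑ k ∈ Ioc 0 ⌊Y⌋₊, a k - perronTransform (LSeries a) (1 + 2 * δ) V Y‖ ≤
      Y ^ (1 + 2 * δ) / V * (2 * Real.log Y ^ m * (1 + Real.log Y) +
        m.factorial / δ ^ m * (1 + 1 / δ)) +
      2 * (Real.log (2 * Y) ^ m * (1 + 4 * Real.arsinh V)) := by
  have hY₀ : 0 < Y := by linarith
  have hfloor : (⌊Y⌋₊ : ℝ) ≤ Y := Nat.floor_le hY₀.le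
  have hfloor' : Y < (⌊Y⌋₊ : ℝ) + 1 := Nat.lt_floor_add_one Y
  set f : ℕ → ℂ := fun k => a k * perronKernelError (1 + 2 * δ) V (Real.log (Y / k)) with hf
  have hsum : HasSum f (∑ k ∈ Ioc 0 ⌊Y⌋₊, a k - perronTransform (LSeries a) (1 + 2 * δ) V Y) :=
    hasSum_mul_perronKernelError ha₀ (by positivity) hY₀
      (LSeriesSummable_of_norm_le_log_pow ha (by simpa using hδ)) V
  have hhead : ‖∑ k ∈ range ⌊Y⌋₊, f k‖ ≤
      Y ^ (1 + 2 * δ) / V * (2 * Real.log Y ^ m * (1 + Real.log Y)) := by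
    rw [range_eq_Ico, sum_eq_sum_Ico_succ_bot (Nat.floor_pos.2 (by linarith))]
    simp only [hf, ha₀, zero_mul, zero_add]
    exact (norm_sum_le _ _).trans (sum_norm_mul_perronKernelError_le ha (by linarith) hV
      (by linarith))
  have hnear (k : ℕ) (hYk : Y / 2 ≤ k) (hkY : k ≤ 2 * Y) :=
    norm_mul_perronKernelError_le_of_near ha (c := 1 + 2 * δ) (by linarith) (by linarith) hV.le hY₀
      hYk hkY
  have htail := ((hasSum_nat_add_iff' (⌊Y⌋₊ + 2)).2 hsum).norm_le_of_bounded
    ((summable_one_div_nat_add_one_rpow hδ).hasSum.mul_left _) fun j =>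
      norm_mul_perronKernelError_le_of_tail ha hδ hV hY₀ (j := j) (by push_cast; linarith)
  have htail' := htail.trans (mul_le_mul_of_nonneg_left (tsum_one_div_nat_add_one_rpow_le hδ)
    (by positivity))
  rw [sum_range_succ, sum_range_succ] at htail'
  have hnear₀ := hnear ⌊Y⌋₊ (by linarith) (by linarith)
  have hnear₁ := hnear (⌊Y⌋₊ + 1) (by push_cast; linarith) (by push_cast; linarith)
  rw [← add_sub_cancel (∑ k ∈ range ⌊Y⌋₊, f k + f ⌊Y⌋₊ + f (⌊Y⌋₊ + 1))
    (∑ k ∈ Ioc 0 ⌊Y⌋₊, a k - _)]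
  refine (norm_add_le_of_le
    (norm_add_le_of_le (norm_add_le_of_le hhead hnear₀) hnear₁) htail').trans_eq ?_
  ring

lemma norm_sum_sub_perronTransform_one_add_one_div_le (ha₀ : a 0 = 0)
    (ha : ∀ k, ‖a k‖ ≤ Real.log k ^ m) {ℓ V Y : ℝ} (hℓ : 1 ≤ ℓ) (hV : 0 < V) (hY : 2 ≤ Y) :
    ‖∑ k ∈ Ioc 0 ⌊Y⌋₊, a k - perronTransform (LSeries a) (1 + 1 / ℓ) V Y‖ ≤
      Y ^ (1 + 1 / ℓ) / V * (2 * Real.log Y ^ m * (1 + Real.log Y) +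
        m.factorial * (2 * ℓ) ^ m * (1 + 2 * ℓ)) +
      2 * (Real.log (2 * Y) ^ m * (1 + 4 * Real.arsinh V)) := by
  have hc : 1 + 1 / ℓ = 1 + 2 * (1 / (2 * ℓ)) := by field_simp
  have hδ : 1 / (2 * ℓ) ≤ 1 / 2 := by
    gcongr
    linarith
  rw [hc]
  refine (norm_sum_sub_perronTransform_le ha₀ ha (by positivity) hδ hV hY).trans_eq ?_
  rw [one_div_one_div, one_div_pow, div_div_eq_mul_div, div_one]

lemma arsinh_le_two_mul_log {V Y : ℝ} (hV : 0 ≤ V) (hVY : V ≤ Y) (hY : 3 ≤ Y) :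
    Real.arsinh V ≤ 2 * Real.log Y := by
  have hsqrt : √(1 + V ^ 2) ≤ 1 + V := Real.sqrt_le_iff.2 ⟨by linarith, by nlinarith⟩
  rw [← Real.log_rpow (by linarith), Real.arsinh]
  refine Real.log_le_log (by positivity) ?_
  norm_num
  nlinarith

lemma rpow_one_add_one_div_log_le {Y Z : ℝ} (hY : 1 < Y) (hYZ : Y ≤ Z) :
    Y ^ (1 + 1 / Real.log Z) ≤ 3 * Y := by
  have hY₀ : 0 < Y := by linarith
  have hlog : Real.log Y ≤ Real.log Z := Real.log_le_log hY₀ hYZ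
  have hexp : Y ^ (1 / Real.log Z) ≤ 3 := by
    rw [Real.rpow_def_of_pos hY₀, mul_one_div]
    calc Real.exp (Real.log Y / Real.log Z) ≤ Real.exp 1 := by
          gcongr
          exact div_le_one_of_le₀ hlog ((Real.log_pos hY).le.trans hlog)
      _ ≤ 3 := Real.exp_one_lt_three.le
  rw [Real.rpow_add hY₀, Real.rpow_one, mul_comm]
  gcongr

lemma log_mul_le_two_mul_log {x y : ℝ} (hx : 0 < x) (hxy : x ≤ y) :
    Real.log (x * y) ≤ 2 * Real.log y := by
  have hlog : Real.log x ≤ Real.log y := Real.log_le_log hx hxy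
  rw [Real.log_mul hx.ne' (hx.trans_le hxy).ne']
  linarith

lemma norm_sum_sub_perronTransform_le_mul_log_pow (ha₀ : a 0 = 0)
    (ha : ∀ k, ‖a k‖ ≤ Real.log k ^ m) {V Y : ℝ} (hV : 0 < V) (hVY : V ≤ Y) (hY : 7 ≤ Y) :
    ‖∑ k ∈ Ioc 0 ⌊Y⌋₊, a k -
        perronTransform (LSeries a) (1 + 1 / Real.log (2 * Real.pi * Y)) V Y‖ ≤
      (12 + 15 * 4 ^ m * m.factorial + 18 * 2 ^ m) * (Y / V) * Real.log Y ^ (m + 1) := by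
  have hπ := Real.pi_gt_three
  have hπ' := Real.pi_lt_d2
  have hlog : 1 ≤ Real.log Y := by
    rw [Real.le_log_iff_exp_le (by linarith)]
    linarith [Real.exp_one_lt_three]
  have hYZ : Y ≤ 2 * Real.pi * Y := le_mul_of_one_le_left (by linarith) (by linarith)
  have hpow := rpow_one_add_one_div_log_le (by linarith) hYZ
  have hℓ : Real.log Y ≤ Real.log (2 * Real.pi * Y) := Real.log_le_log (by linarith) hYZ
  have hℓ' := log_mul_le_two_mul_log (y := Y) Real.two_pi_pos (by linarith)
  have hlog_two_mul := log_mul_le_two_mul_log (y := Y) two_pos (by linarith)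
  have harsinh := arsinh_le_two_mul_log hV.le hVY (by linarith)
  have hmain := norm_sum_sub_perronTransform_one_add_one_div_le ha₀ ha (hlog.trans hℓ) hV
    (Y := Y) (by linarith)
  have hlog_two_mul₀ : 0 ≤ Real.log (2 * Y) := Real.log_nonneg (by linarith)
  have harsinh₀ : 0 ≤ Real.arsinh V := Real.arsinh_nonneg_iff.2 hV.le
  set l := Real.log Y
  set ℓ := Real.log (2 * Real.pi * Y)
  have hℓ₀ : 0 < ℓ := by linarith
  calc _ ≤ _ := hmain
    _ ≤ 3 * Y / V *
          (2 * l ^ m * (l + l) + m.factorial * (2 * (2 * l)) ^ m * (l + 2 * (2 * l))) +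
        2 * ((2 * l) ^ m * (l + 4 * (2 * l))) := by gcongr
    _ = (12 + 15 * 4 ^ m * m.factorial) * (Y / V) * l ^ (m + 1) +
        18 * 2 ^ m * 1 * l ^ (m + 1) := by
      rw [← mul_assoc 2 2 l, show (2 * 2 : ℝ) = 4 by norm_num, mul_pow, mul_pow]
      ring
    _ ≤ (12 + 15 * 4 ^ m * m.factorial) * (Y / V) * l ^ (m + 1) +
        18 * 2 ^ m * (Y / V) * l ^ (m + 1) := by
      gcongr
      exact (one_le_div hV).2 hVY
    _ = (12 + 15 * 4 ^ m * m.factorial + 18 * 2 ^ m) * (Y / V) * l ^ (m + 1) := by ring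

end ErrorTerm

section VonMangoldt

open ArithmeticFunction

/-- The arithmetic function `r ↦ Λ(r) log^n r`, whose Dirichlet series is
`(-1)^(n+1) (ζ'/ζ)^{(n)}`. -/
noncomputable def vonMangoldtLogPow (n : ℕ) : ArithmeticFunction ℝ :=
  ⟨fun r => vonMangoldt r * Real.log r ^ n, by simp⟩

lemma vonMangoldtLogPow_apply (n r : ℕ) :
    vonMangoldtLogPow n r = vonMangoldt r * Real.log r ^ n := rfl

lemma vonMangoldtLogPow_nonneg (n r : ℕ) : 0 ≤ vonMangoldtLogPow n r :=
  mul_nonneg vonMangoldt_nonneg (pow_nonneg (Real.log_natCast_nonneg r) n)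

/-- The coefficients `k ↦ ∑_{mr = k} Λ(r) log^n r`, whose partial sums are `vonMangoldtPairSum n`;
complex-valued so as to form a Dirichlet series. -/
noncomputable def vonMangoldtPairCoeff (n k : ℕ) : ℂ :=
  ((zeta * vonMangoldtLogPow n : ArithmeticFunction ℝ) k : ℝ)

lemma vonMangoldtPairCoeff_zero (n : ℕ) : vonMangoldtPairCoeff n 0 = 0 := by
  simp [vonMangoldtPairCoeff]

lemma norm_vonMangoldtPairCoeff_le (n k : ℕ) :
    ‖vonMangoldtPairCoeff n k‖ ≤ Real.log k ^ (n + 1) := by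
  rw [vonMangoldtPairCoeff, coe_zeta_mul_apply, norm_real,
    Real.norm_of_nonneg (sum_nonneg fun r _ => vonMangoldtLogPow_nonneg n r), pow_succ',
    ← vonMangoldt_sum, sum_mul]
  refine sum_le_sum fun r hr => ?_
  have hr₀ : (0 : ℝ) < r := Nat.cast_pos.2 (Nat.pos_of_mem_divisors hr)
  have hrk : (r : ℝ) ≤ k := Nat.cast_le.2 (Nat.divisor_le hr)
  rw [vonMangoldt_sum, vonMangoldtLogPow_apply]
  gcongr

lemma sum_vonMangoldtPairCoeff (n : ℕ) {Y : ℝ} (hY : 0 ≤ Y) :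
    ∑ k ∈ Ioc 0 ⌊Y⌋₊, vonMangoldtPairCoeff n k = vonMangoldtPairSum n Y := by
  simp only [vonMangoldtPairCoeff]
  rw [← ofReal_sum, sum_Ioc_mul_eq_sum_prod_filter, vonMangoldtPairSum]
  congr 1
  refine sum_congr ?_ fun p hp => ?_
  · ext p
    simp [Nat.le_floor_iff hY, Nat.succ_le_iff]
  · have hp₁ : p.1 ≠ 0 := (mem_Ioc.1 (mem_product.1 (mem_filter.1 hp).1).1).1.ne'
    simp [vonMangoldtLogPow_apply, hp₁]

/-- The von Mangoldt function as a sequence of complex coefficients. -/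
noncomputable def vonMangoldtCoeff (k : ℕ) : ℂ := (vonMangoldt k : ℝ)

lemma iterate_logMul_apply (f : ℕ → ℂ) (n k : ℕ) :
    LSeries.logMul^[n] f k = Complex.log k ^ n * f k := by
  induction n with
  | zero => simp
  | succ n ih =>
    rw [Function.iterate_succ_apply', LSeries.logMul, ih, pow_succ']
    ring

lemma vonMangoldtPairCoeff_eq_convolution (n : ℕ) :
    vonMangoldtPairCoeff n = LSeries.convolution 1 (LSeries.logMul^[n] vonMangoldtCoeff) := by
  ext k
  rw [LSeries.convolution_def, vonMangoldtPairCoeff, mul_apply, ofReal_sum]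
  refine sum_congr rfl fun p hp => ?_
  have hp₁ : p.1 ≠ 0 := (Nat.ne_zero_of_mem_divisorsAntidiagonal hp).1
  simp [iterate_logMul_apply, vonMangoldtLogPow_apply, vonMangoldtCoeff, hp₁, mul_comm]

lemma abscissaOfAbsConv_vonMangoldtCoeff_lt {s : ℂ} (hs : 1 < s.re) :
    LSeries.abscissaOfAbsConv vonMangoldtCoeff < s.re := by
  refine lt_of_le_of_lt ?_ (EReal.coe_lt_coe_iff.2 hs)
  refine LSeries.abscissaOfAbsConv_le_of_forall_lt_LSeriesSummable' fun y hy => ?_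
  exact LSeriesSummable_vonMangoldt (by simpa using EReal.coe_lt_coe_iff.1 hy)

lemma LSeries_iterate_logMul_vonMangoldtCoeff (n : ℕ) {s : ℂ} (hs : 1 < s.re) :
    LSeries (LSeries.logMul^[n] vonMangoldtCoeff) s =
      (-1) ^ (n + 1) * iteratedDeriv n (fun s => deriv riemannZeta s / riemannZeta s) s := by
  have hlogDeriv : (fun s => deriv riemannZeta s / riemannZeta s) =ᶠ[nhds s]
      -LSeries vonMangoldtCoeff := by
    filter_upwards [(isOpen_lt continuous_const continuous_re).mem_nhds hs] with z hz
    have hΛ : LSeries vonMangoldtCoeff z = -deriv riemannZeta z / riemannZeta z :=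
      LSeries_vonMangoldt_eq_deriv_riemannZeta_div hz
    rw [Pi.neg_apply, hΛ, neg_div, neg_neg]
  rw [hlogDeriv.iteratedDeriv_eq, iteratedDeriv_neg,
    LSeries_iteratedDeriv n (abscissaOfAbsConv_vonMangoldtCoeff_lt hs), pow_succ]
  have hsign : ((-1 : ℂ) ^ n) * (-1) ^ n = 1 := by simp [← mul_pow]
  linear_combination -(LSeries (LSeries.logMul^[n] vonMangoldtCoeff) s) * hsign

lemma LSeries_vonMangoldtPairCoeff (n : ℕ) {s : ℂ} (hs : 1 < s.re) :
    LSeries (vonMangoldtPairCoeff n) s = (-1) ^ (n + 1) *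
      (iteratedDeriv n (fun s => deriv riemannZeta s / riemannZeta s) s * riemannZeta s) := by
  have hsummable : LSeriesSummable (LSeries.logMul^[n] vonMangoldtCoeff) s := by
    refine LSeriesSummable_of_abscissaOfAbsConv_lt_re ?_
    rw [LSeries.absicssaOfAbsConv_logPowMul]
    exact abscissaOfAbsConv_vonMangoldtCoeff_lt hs
  rw [vonMangoldtPairCoeff_eq_convolution,
    LSeries_convolution' (LSeriesSummable_one_iff.2 hs) hsummable,
    LSeries_iterate_logMul_vonMangoldtCoeff n hs, LSeries_one_eq_riemannZeta hs]
  ring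

lemma perronTransform_vonMangoldtPairCoeff (n : ℕ) {c : ℝ} (hc : 1 < c) (V Y : ℝ) :
    perronTransform (LSeries (vonMangoldtPairCoeff n)) c V Y =
      (-1) ^ (n + 1) * perronIntegral n c V Y := by
  have hL (t : ℝ) := LSeries_vonMangoldtPairCoeff n (s := c + t * I) (by simpa using hc)
  simp only [perronTransform, perronIntegral, hL, mul_assoc, mul_div_assoc,
    intervalIntegral.integral_const_mul]
  ring

end VonMangoldt

/-- truncated Perron formula: with `c = 1 + 1/log(2πY)` and
`2 ≤ V ≤ Y`, as `Y → ∞`,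
`(-1)^{n+1} ∑_{mr ≤ Y} Λ(r) log^n r = (1/2πi)∫_{c-iV}^{c+iV} (ζ'/ζ)^{(n)}(s) ζ(s) Y^s/s ds
+ O((Y/V) log^{n+2} Y)`. -/
theorem truncated_perron (n : ℕ) (hn : 1 ≤ n) :
    ∃ K > (0 : ℝ), ∃ Y₀ : ℝ, ∀ Y ≥ Y₀, ∀ V : ℝ, 2 ≤ V → V ≤ Y →
      ∀ c : ℝ, c = 1 + 1 / Real.log (2 * Real.pi * Y) →
        ‖(-1 : ℂ) ^ (n + 1) * ((vonMangoldtPairSum n Y : ℝ) : ℂ) -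
            perronIntegral n c V Y‖ ≤
          K * (Y / V) * Real.log Y ^ (n + 2) := by
  refine ⟨12 + 15 * 4 ^ (n + 1) * (n + 1).factorial + 18 * 2 ^ (n + 1), by positivity, 7, ?_⟩
  rintro Y (hY : 7 ≤ Y) V hV hVY c rfl
  have hlog : 0 < Real.log (2 * Real.pi * Y) := Real.log_pos (by nlinarith [Real.pi_gt_three])
  have hc : 1 < 1 + 1 / Real.log (2 * Real.pi * Y) := lt_add_of_pos_right 1 (by positivity)
  have hsign : (-1 : ℂ) ^ (n + 1) * (-1) ^ (n + 1) = 1 := by simp [← mul_pow]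
  have hperron := norm_sum_sub_perronTransform_le_mul_log_pow (vonMangoldtPairCoeff_zero n)
    (norm_vonMangoldtPairCoeff_le n) (by linarith) hVY hY
  rw [perronTransform_vonMangoldtPairCoeff n hc, sum_vonMangoldtPairCoeff n (by linarith)]
    at hperron
  calc _ = ‖(-1 : ℂ) ^ (n + 1) * (vonMangoldtPairSum n Y - (-1) ^ (n + 1) * perronIntegral n
        (1 + 1 / Real.log (2 * Real.pi * Y)) V Y)‖ := by
        rw [mul_sub, ← mul_assoc _ _ (perronIntegral _ _ _ _), hsign, one_mul]
    _ ≤ _ := by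
        rw [norm_mul, norm_pow, norm_neg, norm_one, one_pow, one_mul]
        exact hperron
end
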